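/- arXiv:1804.03043 — 5 statements merged into one kernel-verified Lean document; each statement's English description precedes it below -/
import Mathlib

section
/- Let λ > 0 be real, m ≥ 0 an integer, and let f(t) = Σ_{l=0}^{m} a_l C_l^λ(t) with real coefficients a_l (set a_{m+1} = 0). Then ∫_{−1}^{1} t · f(t)² · (1−t²)^{λ−1/2} dt = (√π · Γ(λ+1/2)/Γ(λ+1)) · Σ_{l=0}^{m−1} (λ²/((l+λ)(l+λ+1))) · (Γ(l+2λ+1)/(l!·Γ(2λ+1))) · 2 a_l a_{l+1}. -/
open Real Finset

/-- The Gegenbauer polynomials `C_l^λ`, defined by `C_0^λ(t) = 1`, `C_1^λ(t) = 2λt` and the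
recurrence `(l+1) C_{l+1}^λ(t) = 2(l+λ) t C_l^λ(t) − (l+2λ−1) C_{l−1}^λ(t)` for `l ≥ 1`. -/
noncomputable def gegenbauer (lam : ℝ) : ℕ → ℝ → ℝ
  | 0 => fun _ => 1
  | 1 => fun t => 2 * lam * t
  | (l + 2) => fun t =>
      (2 * ((l : ℝ) + 1 + lam) * t * gegenbauer lam (l + 1) t
        - ((l : ℝ) + 2 * lam) * gegenbauer lam l t) / ((l : ℝ) + 2)


noncomputable def gegD (lam : ℝ) : ℕ → ℝ → ℝ
  | 0 => fun _ => 0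
  | 1 => fun _ => 2 * lam
  | (l + 2) => fun t =>
      (2 * ((l : ℝ) + 1 + lam) * (gegenbauer lam (l + 1) t + t * gegD lam (l + 1) t)
        - ((l : ℝ) + 2 * lam) * gegD lam l t) / ((l : ℝ) + 2)

lemma geg_hasDerivAt (lam : ℝ) : ∀ (l : ℕ) (t : ℝ),
    HasDerivAt (gegenbauer lam l) (gegD lam l t) t
  | 0, t => by
    simpa [gegenbauer, gegD] using hasDerivAt_const t (1 : ℝ)
  | 1, t => by
    simpa [gegenbauer, gegD] using (hasDerivAt_id t).const_mul (2 * lam)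
  | (l + 2), t => by
    have h1 := geg_hasDerivAt lam (l + 1) t
    have h0 := geg_hasDerivAt lam l t
    have h := ((((hasDerivAt_id t).const_mul (2 * ((l : ℝ) + 1 + lam))).mul h1).sub
      (h0.const_mul ((l : ℝ) + 2 * lam))).div_const ((l : ℝ) + 2)
    have hd : gegD lam (l + 2) t = (2 * ((l : ℝ) + 1 + lam) * 1 * gegenbauer lam (l + 1) t
        + 2 * ((l : ℝ) + 1 + lam) * id t * gegD lam (l + 1) t
        - ((l : ℝ) + 2 * lam) * gegD lam l t) / ((l : ℝ) + 2) := by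
      simp only [gegD, id]; ring
    rw [hd]
    have hf : gegenbauer lam (l + 2) = fun t => (2 * ((l : ℝ) + 1 + lam) * t *
        gegenbauer lam (l + 1) t - ((l : ℝ) + 2 * lam) * gegenbauer lam l t) / ((l : ℝ) + 2) := by
      funext t; simp only [gegenbauer]
    rw [hf]
    exact h

lemma geg_cont (lam : ℝ) (l : ℕ) : Continuous (gegenbauer lam l) :=
  continuous_iff_continuousAt.2 fun t => (geg_hasDerivAt lam l t).continuousAt

lemma gegD_cont (lam : ℝ) : ∀ (l : ℕ), Continuous (gegD lam l)
  | 0 => by simp only [gegD]; fun_prop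
  | 1 => by simp only [gegD]; fun_prop
  | (l + 2) => by
    have h1 := gegD_cont lam (l + 1)
    have h0 := gegD_cont lam l
    have h := geg_cont lam (l + 1)
    simp only [gegD]; fun_prop

lemma geg_rec (lam : ℝ) (l : ℕ) (t : ℝ) : ((l : ℝ) + 2) * gegenbauer lam (l + 2) t =
    2 * ((l : ℝ) + 1 + lam) * t * gegenbauer lam (l + 1) t
        - ((l : ℝ) + 2 * lam) * gegenbauer lam l t := by
  have : (l : ℝ) + 2 ≠ 0 := by positivity
  simp only [gegenbauer]; field_simp

lemma gegD_AB (lam : ℝ) (t : ℝ) : ∀ l : ℕ,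
    gegD lam (l + 1) t = t * gegD lam l t + ((l : ℝ) + 2 * lam) * gegenbauer lam l t ∧
    t * gegD lam (l + 1) t - gegD lam l t = ((l : ℝ) + 1) * gegenbauer lam (l + 1) t
  | 0 => by simp [gegD, gegenbauer]; ring
  | (l + 1) => by
    obtain ⟨hA, hB⟩ := gegD_AB lam t l
    have hl : (l : ℝ) + 2 ≠ 0 := by positivity
    have hd : ((l : ℝ) + 2) * gegD lam (l + 2) t =
        2 * ((l : ℝ) + 1 + lam) * (gegenbauer lam (l + 1) t + t * gegD lam (l + 1) t)
        - ((l : ℝ) + 2 * lam) * gegD lam l t := by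
      simp only [gegD]; field_simp
    have hr := geg_rec lam l t
    have hA' : gegD lam (l + 2) t = t * gegD lam (l + 1) t +
        ((l : ℝ) + 1 + 2 * lam) * gegenbauer lam (l + 1) t := by
      apply mul_left_cancel₀ hl
      linear_combination hd + ((l : ℝ) + 2 * lam) * hB
    push_cast
    refine ⟨hA', ?_⟩
    show t * gegD lam (l + 2) t - gegD lam (l + 1) t = ((l : ℝ) + 1 + 1) * gegenbauer lam (l + 2) t
    linear_combination t * hA' - hr + t * hB - hA

lemma geg_P (lam : ℝ) (t : ℝ) (l : ℕ) : (1 - t ^ 2) * gegD lam l t =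
    ((l : ℝ) + 2 * lam) * t * gegenbauer lam l t - ((l : ℝ) + 1) * gegenbauer lam (l + 1) t := by
  obtain ⟨hA, hB⟩ := gegD_AB lam t l
  linear_combination t * hA - hB

lemma geg_weight_integral (lam : ℝ) (hlam : 0 < lam) :
    ∫ t in (-1 : ℝ)..1, (1 - t ^ 2) ^ (lam - 1 / 2) =
      Real.sqrt π * Real.Gamma (lam + 1 / 2) / Real.Gamma (lam + 1) := by
  have hb := ProbabilityTheory.beta_eq_betaIntegralReal (lam + 1 / 2) (lam + 1 / 2)
    (by positivity) (by positivity)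
  have h1 : Complex.betaIntegral ((lam + 1 / 2 : ℝ) : ℂ) ((lam + 1 / 2 : ℝ) : ℂ) =
      ((∫ x in (0 : ℝ)..1, x ^ (lam - 1 / 2) * (1 - x) ^ (lam - 1 / 2) : ℝ) : ℂ) := by
    rw [Complex.betaIntegral, ← intervalIntegral.integral_ofReal]
    apply intervalIntegral.integral_congr
    intro x hx
    rw [Set.uIcc_of_le zero_le_one] at hx
    simp only
    rw [Complex.ofReal_mul, Complex.ofReal_cpow hx.1, Complex.ofReal_cpow (by linarith [hx.2])]
    push_cast
    congr 2 <;> ring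
  rw [h1, Complex.ofReal_re] at hb
  have h2 := intervalIntegral.integral_comp_mul_sub (a := 0) (b := 1)
    (fun t : ℝ => (1 - t ^ 2) ^ (lam - 1 / 2)) (two_ne_zero) 1
  have h3 : ∫ x in (0 : ℝ)..1, (1 - (2 * x - 1) ^ 2) ^ (lam - 1 / 2) =
      (4 : ℝ) ^ (lam - 1 / 2) *
        ∫ x in (0 : ℝ)..1, x ^ (lam - 1 / 2) * (1 - x) ^ (lam - 1 / 2) := by
    rw [← intervalIntegral.integral_const_mul]
    apply intervalIntegral.integral_congr
    intro x hx
    rw [Set.uIcc_of_le zero_le_one] at hx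
    simp only
    rw [← Real.mul_rpow hx.1 (by linarith [hx.2]),
      ← Real.mul_rpow (by norm_num) (mul_nonneg hx.1 (by linarith [hx.2]))]
    congr 1; ring
  rw [h3, ← hb] at h2
  norm_num at h2
  have h4 : ∫ t in (-1 : ℝ)..1, (1 - t ^ 2) ^ (lam - 1 / 2) =
      2 * ((4 : ℝ) ^ (lam - 1 / 2) * ProbabilityTheory.beta (lam + 1 / 2) (lam + 1 / 2)) := by
    norm_num
    linarith
  rw [h4, ProbabilityTheory.beta]
  have hd := Real.Gamma_mul_Gamma_add_half (lam + 1 / 2)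
  rw [show lam + 1 / 2 + 1 / 2 = lam + 1 by ring,
    show 2 * (lam + 1 / 2) = 2 * lam + 1 by ring,
    show 1 - (2 * lam + 1) = - (2 * lam) by ring] at hd
  rw [show lam + 1 / 2 + (lam + 1 / 2) = 2 * lam + 1 by ring]
  have h5 : (4 : ℝ) ^ (lam - 1 / 2) = 2 ^ (2 * lam) / 2 := by
    rw [show (4 : ℝ) = 2 ^ (2 : ℝ) by norm_num, ← Real.rpow_mul (by norm_num),
      show 2 * (lam - 1 / 2) = 2 * lam - 1 by ring, Real.rpow_sub_one (by norm_num)]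
  rw [h5]
  rw [Real.rpow_neg (by norm_num)] at hd
  have g1 := (Real.Gamma_pos_of_pos (show 0 < lam + 1 by positivity)).ne'
  have g2 := (Real.Gamma_pos_of_pos (show 0 < 2 * lam + 1 by positivity)).ne'
  have g3 : (2 : ℝ) ^ (2 * lam) ≠ 0 := by positivity
  field_simp at hd ⊢
  linear_combination hd

lemma geg_weight_int (lam : ℝ) (hlam : 0 < lam) :
    IntervalIntegrable (fun t : ℝ => (1 - t ^ 2) ^ (lam - 1 / 2)) MeasureTheory.volume (-1) 1 := by
  apply intervalIntegral.intervalIntegrable_of_integral_ne_zero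
  rw [geg_weight_integral lam hlam]
  have g1 := (Real.Gamma_pos_of_pos (show 0 < lam + 1 by positivity))
  have g2 := (Real.Gamma_pos_of_pos (show 0 < lam + 1 / 2 by positivity))
  positivity

lemma geg_int (lam : ℝ) (hlam : 0 < lam) {f : ℝ → ℝ} (hf : Continuous f) :
    IntervalIntegrable (fun t : ℝ => f t * (1 - t ^ 2) ^ (lam - 1 / 2))
      MeasureTheory.volume (-1) 1 :=
  (geg_weight_int lam hlam).continuousOn_mul hf.continuousOn

noncomputable def gegL (lam : ℝ) (f : ℝ → ℝ) : ℝ :=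
  ∫ t in (-1 : ℝ)..1, f t * (1 - t ^ 2) ^ (lam - 1 / 2)

lemma gegL_lin (lam : ℝ) (hlam : 0 < lam) {f g : ℝ → ℝ} (hf : Continuous f) (hg : Continuous g)
    (c d : ℝ) {F : ℝ → ℝ} (hF : ∀ t, F t = c * f t + d * g t) :
    gegL lam F = c * gegL lam f + d * gegL lam g := by
  unfold gegL
  rw [← intervalIntegral.integral_const_mul, ← intervalIntegral.integral_const_mul,
    ← intervalIntegral.integral_add ((geg_int lam hlam hf).const_mul c)
      ((geg_int lam hlam hg).const_mul d)]
  congr 1; funext t; rw [hF]; ring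

lemma gegL_zero (lam : ℝ) (hlam : 0 < lam) (l : ℕ) (hl : 0 < l) :
    gegL lam (gegenbauer lam l) = 0 := by
  set F : ℝ → ℝ := fun t => (1 - t ^ 2) ^ (lam + 1 / 2) * gegD lam l t with hF
  have hlR : (0 : ℝ) < l := by exact_mod_cast hl
  have key := intervalIntegral.integral_eq_sub_of_hasDerivAt_of_le (a := -1) (b := 1) (f := F)
    (f' := fun t => (-(l * ((l : ℝ) + 2 * lam)) * gegenbauer lam l t) *
      (1 - t ^ 2) ^ (lam - 1 / 2)) (by norm_num) ?_ ?_ ?_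
  · have e1 : F 1 = 0 := by
      have : lam + 1 / 2 ≠ 0 := by positivity
      simp only [hF]; norm_num; left; rw [Real.zero_rpow]; convert this using 1
    have e2 : F (-1) = 0 := by
      have : lam + 1 / 2 ≠ 0 := by positivity
      simp only [hF]; norm_num; left; rw [Real.zero_rpow]; convert this using 1
    rw [e1, e2] at key
    have h := gegL_lin lam hlam (geg_cont lam l) (geg_cont lam l) (-(l * ((l : ℝ) + 2 * lam))) 0
      (F := fun t => -(l * ((l : ℝ) + 2 * lam)) * gegenbauer lam l t) (by intro t; ring)
    have h' : gegL lam (fun t => -(l * ((l : ℝ) + 2 * lam)) * gegenbauer lam l t) = 0 := by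
      unfold gegL; rw [key]; ring
    rw [h'] at h
    have hne : (l * ((l : ℝ) + 2 * lam)) ≠ 0 := by positivity
    have : (l * ((l : ℝ) + 2 * lam)) * gegL lam (gegenbauer lam l) = 0 := by linarith
    exact (mul_eq_zero.1 this).resolve_left hne
  · apply Continuous.continuousOn
    refine Continuous.mul ?_ (gegD_cont lam l)
    exact Continuous.rpow_const (by fun_prop) (fun t => Or.inr (by positivity))
  · intro t ht
    have hpos : 0 < 1 - t ^ 2 := by nlinarith [ht.1, ht.2]
    have hw : HasDerivAt (fun t : ℝ => (1 - t ^ 2) ^ (lam - 1 / 2))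
        ((-(2 * t)) * (lam - 1 / 2) * (1 - t ^ 2) ^ (lam - 1 / 2 - 1)) t := by
      have h0 : HasDerivAt (fun t : ℝ => 1 - t ^ 2) (-(2 * t)) t := by
        simpa using (hasDerivAt_pow 2 t).const_sub 1
      exact h0.rpow_const (Or.inl hpos.ne')
    have hP : HasDerivAt (fun t : ℝ => ((l : ℝ) + 2 * lam) * (t * gegenbauer lam l t)
        - ((l : ℝ) + 1) * gegenbauer lam (l + 1) t)
        (((l : ℝ) + 2 * lam) * (1 * gegenbauer lam l t + t * gegD lam l t)
        - ((l : ℝ) + 1) * gegD lam (l + 1) t) t :=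
      (((hasDerivAt_id t).mul (geg_hasDerivAt lam l t)).const_mul _).sub
        ((geg_hasDerivAt lam (l + 1) t).const_mul _)
    have hm := hw.mul hP
    have hev : F =ᶠ[nhds t] (fun t : ℝ => (1 - t ^ 2) ^ (lam - 1 / 2)) *
        (fun t : ℝ => ((l : ℝ) + 2 * lam) * (t * gegenbauer lam l t)
        - ((l : ℝ) + 1) * gegenbauer lam (l + 1) t) := by
      filter_upwards [Ioo_mem_nhds ht.1 ht.2] with s hs
      have hpos : 0 < 1 - s ^ 2 := by nlinarith [hs.1, hs.2]
      simp only [hF, Pi.mul_apply]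
      rw [show lam + 1 / 2 = lam - 1 / 2 + 1 by ring, Real.rpow_add_one hpos.ne']
      linear_combination (1 - s ^ 2) ^ (lam - 1 / 2) * geg_P lam s l
    refine (hm.congr_of_eventuallyEq hev).congr_deriv ?_
    have hw1 : (1 - t ^ 2) ^ (lam - 1 / 2) =
        (1 - t ^ 2) ^ (lam - 1 / 2 - 1) * (1 - t ^ 2) := by
      rw [← Real.rpow_add_one hpos.ne']; congr 1; ring
    rw [hw1]
    generalize (1 - t ^ 2) ^ (lam - 1 / 2 - 1) = w
    have hp := geg_P lam t l
    have hA := (gegD_AB lam t l).1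
    linear_combination (2 * t) * (lam - 1 / 2) * w * hp -
      w * (1 - t ^ 2) * ((l : ℝ) + 1) * hA
  · have := geg_cont lam l
    exact geg_int lam hlam (by fun_prop)

lemma geg_tmul (lam : ℝ) (hlam : 0 < lam) (l : ℕ) (t : ℝ) : t * gegenbauer lam (l + 1) t =
    ((l : ℝ) + 2) / (2 * ((l : ℝ) + 1 + lam)) * gegenbauer lam (l + 2) t +
    ((l : ℝ) + 2 * lam) / (2 * ((l : ℝ) + 1 + lam)) * gegenbauer lam l t := by
  have h := geg_rec lam l t
  have : (l : ℝ) + 1 + lam ≠ 0 := by positivity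
  field_simp
  linear_combination -h

noncomputable def gegI (lam : ℝ) (k l : ℕ) : ℝ :=
  gegL lam (fun t => gegenbauer lam k t * gegenbauer lam l t)

noncomputable def gegJ (lam : ℝ) (k l : ℕ) : ℝ :=
  gegL lam (fun t => t * gegenbauer lam k t * gegenbauer lam l t)

lemma gegI_comm (lam : ℝ) (k l : ℕ) : gegI lam k l = gegI lam l k := by
  unfold gegI; congr 1; funext t; ring

lemma gegJ_comm (lam : ℝ) (k l : ℕ) : gegJ lam k l = gegJ lam l k := by
  unfold gegJ; congr 1; funext t; ring

lemma geg_mul_cont (lam : ℝ) (k l : ℕ) :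
    Continuous (fun t => gegenbauer lam k t * gegenbauer lam l t) :=
  (geg_cont lam k).mul (geg_cont lam l)

lemma geg_tmul_cont (lam : ℝ) (k l : ℕ) :
    Continuous (fun t => t * gegenbauer lam k t * gegenbauer lam l t) :=
  (continuous_id.mul (geg_cont lam k)).mul (geg_cont lam l)

lemma gegJ_succ (lam : ℝ) (hlam : 0 < lam) (k l : ℕ) : gegJ lam k (l + 1) =
    ((l : ℝ) + 2) / (2 * ((l : ℝ) + 1 + lam)) * gegI lam k (l + 2) +
    ((l : ℝ) + 2 * lam) / (2 * ((l : ℝ) + 1 + lam)) * gegI lam k l := by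
  refine gegL_lin lam hlam (geg_mul_cont lam k (l + 2)) (geg_mul_cont lam k l) _ _ ?_
  intro t
  linear_combination gegenbauer lam k t * geg_tmul lam hlam l t

lemma gegJ_zero (lam : ℝ) (hlam : 0 < lam) (k : ℕ) : gegJ lam k 0 =
    1 / (2 * lam) * gegI lam k 1 := by
  have := gegL_lin lam hlam (geg_mul_cont lam k 1) (geg_mul_cont lam k 1) (1 / (2 * lam)) 0
    (F := fun t => t * gegenbauer lam k t * gegenbauer lam 0 t) (by
      intro t; simp only [gegenbauer]; field_simp; ring)
  rw [gegJ, this, gegI]; ring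

lemma gegI_rec (lam : ℝ) (hlam : 0 < lam) (k l : ℕ) : gegI lam (k + 2) l =
    2 * ((k : ℝ) + 1 + lam) / ((k : ℝ) + 2) * gegJ lam (k + 1) l +
    (- ((k : ℝ) + 2 * lam) / ((k : ℝ) + 2)) * gegI lam k l := by
  refine gegL_lin lam hlam (geg_tmul_cont lam (k + 1) l) (geg_mul_cont lam k l) _ _ ?_
  intro t
  simp only [gegenbauer]; ring

lemma gegI_zero (lam : ℝ) (hlam : 0 < lam) (l : ℕ) (hl : 0 < l) : gegI lam 0 l = 0 := by
  rw [← gegL_zero lam hlam l hl, gegI]; congr 1; funext t; simp [gegenbauer]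

lemma gegI_orth (lam : ℝ) (hlam : 0 < lam) : ∀ k l : ℕ, k < l → gegI lam k l = 0
  | 0, l, h => gegI_zero lam hlam l h
  | 1, l, h => by
    obtain ⟨j, rfl⟩ : ∃ j, l = j + 1 := ⟨l - 1, by omega⟩
    have h0 := gegJ_zero lam hlam (j + 1)
    rw [gegJ_comm, gegJ_succ lam hlam, gegI_zero lam hlam _ (by omega),
      gegI_zero lam hlam _ (by omega), gegI_comm] at h0
    have : 1 / (2 * lam) ≠ 0 := by positivity
    simp only [mul_zero, add_zero] at h0
    exact (mul_eq_zero.1 h0.symm).resolve_left this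
  | (k + 2), l, h => by
    obtain ⟨j, rfl⟩ : ∃ j, l = j + 1 := ⟨l - 1, by omega⟩
    rw [gegI_rec lam hlam, gegJ_succ lam hlam, gegI_orth lam hlam k (j + 1) (by omega),
      gegI_orth lam hlam (k + 1) (j + 2) (by omega), gegI_orth lam hlam (k + 1) j (by omega)]
    ring

lemma gegJ_far (lam : ℝ) (hlam : 0 < lam) (k j : ℕ) (h : k < j) : gegJ lam k (j + 1) = 0 := by
  rw [gegJ_succ lam hlam, gegI_orth lam hlam _ _ h, gegI_orth lam hlam _ _ (by omega)]; ring

lemma gegJ_diag (lam : ℝ) (hlam : 0 < lam) : ∀ k : ℕ, gegJ lam k k = 0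
  | 0 => by rw [gegJ_zero lam hlam, gegI_zero lam hlam 1 one_pos]; ring
  | (k + 1) => by
    rw [gegJ_succ lam hlam, gegI_orth lam hlam _ _ (by omega), gegI_comm lam (k + 1) k,
      gegI_orth lam hlam k (k + 1) (by omega)]; ring

lemma gegJ_near (lam : ℝ) (hlam : 0 < lam) (k : ℕ) : gegJ lam k (k + 1) =
    ((k : ℝ) + 2 * lam) / (2 * ((k : ℝ) + 1 + lam)) * gegI lam k k := by
  rw [gegJ_succ lam hlam, gegI_orth lam hlam _ _ (by omega)]; ring

lemma gegJ_near' (lam : ℝ) (hlam : 0 < lam) : ∀ k : ℕ, gegJ lam k (k + 1) =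
    ((k : ℝ) + 1) / (2 * ((k : ℝ) + lam)) * gegI lam (k + 1) (k + 1)
  | 0 => by rw [gegJ_comm, gegJ_zero lam hlam]; simp
  | (k + 1) => by
    rw [gegJ_comm, gegJ_succ lam hlam, gegI_comm lam (k + 1 + 1) k,
      gegI_orth lam hlam k _ (by omega)]
    push_cast
    ring_nf

lemma gegI_succ (lam : ℝ) (hlam : 0 < lam) (k : ℕ) : gegI lam (k + 1) (k + 1) =
    ((k : ℝ) + lam) * ((k : ℝ) + 2 * lam) / (((k : ℝ) + 1) * ((k : ℝ) + 1 + lam)) *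
      gegI lam k k := by
  have h := gegJ_near lam hlam k
  rw [gegJ_near' lam hlam] at h
  have h1 : (k : ℝ) + lam ≠ 0 := by positivity
  have h2 : (k : ℝ) + 1 + lam ≠ 0 := by positivity
  have h3 : (k : ℝ) + 1 ≠ 0 := by positivity
  field_simp at h ⊢
  linear_combination h

lemma gegI_val (lam : ℝ) (hlam : 0 < lam) : ∀ k : ℕ, gegI lam k k =
    Real.sqrt π * Real.Gamma (lam + 1 / 2) / Real.Gamma (lam + 1) *
      (lam / ((k : ℝ) + lam) * (Real.Gamma ((k : ℝ) + 2 * lam) /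
        ((Nat.factorial k : ℝ) * Real.Gamma (2 * lam))))
  | 0 => by
    have g2 := (Real.Gamma_pos_of_pos (show 0 < 2 * lam by positivity)).ne'
    rw [← geg_weight_integral lam hlam]
    simp [gegI, gegL, gegenbauer]
    field_simp
  | (k + 1) => by
    have g1 := (Real.Gamma_pos_of_pos (show 0 < lam + 1 by positivity)).ne'
    have g2 := (Real.Gamma_pos_of_pos (show 0 < 2 * lam by positivity)).ne'
    have h1 : (k : ℝ) + lam ≠ 0 := by positivity
    have h2 : (k : ℝ) + 1 + lam ≠ 0 := by positivity
    have h3 : (k : ℝ) + 1 ≠ 0 := by positivity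
    have h4 : (k : ℝ) + 2 * lam ≠ 0 := by positivity
    have h5 : (Nat.factorial k : ℝ) ≠ 0 := by positivity
    rw [gegI_succ lam hlam, gegI_val lam hlam k, Nat.factorial_succ]
    push_cast
    rw [show (k : ℝ) + 1 + 2 * lam = (k + 2 * lam) + 1 by ring, Real.Gamma_add_one h4]
    field_simp

lemma gegJ_val (lam : ℝ) (hlam : 0 < lam) (k : ℕ) : gegJ lam k (k + 1) =
    Real.sqrt π * Real.Gamma (lam + 1 / 2) / Real.Gamma (lam + 1) *
      ((lam ^ 2 / (((k : ℝ) + lam) * ((k : ℝ) + lam + 1))) *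
            (Real.Gamma ((k : ℝ) + 2 * lam + 1) /
              ((Nat.factorial k : ℝ) * Real.Gamma (2 * lam + 1)))) := by
  have g1 := (Real.Gamma_pos_of_pos (show 0 < lam + 1 by positivity)).ne'
  have g2 := (Real.Gamma_pos_of_pos (show 0 < 2 * lam by positivity)).ne'
  have h1 : (k : ℝ) + lam ≠ 0 := by positivity
  have h2 : (k : ℝ) + lam + 1 ≠ 0 := by positivity
  have h4 : (k : ℝ) + 2 * lam ≠ 0 := by positivity
  have h5 : (Nat.factorial k : ℝ) ≠ 0 := by positivity
  rw [gegJ_near lam hlam, gegI_val lam hlam, Real.Gamma_add_one h4,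
    Real.Gamma_add_one (show 2 * lam ≠ 0 by positivity),
    show (k : ℝ) + 1 + lam = k + lam + 1 by ring]
  field_simp

lemma gegS_cont (lam : ℝ) (a : ℕ → ℝ) (n : ℕ) :
    Continuous (fun t => ∑ l ∈ Finset.range n, a l * gegenbauer lam l t) :=
  continuous_finsetSum _ fun l _ => (geg_cont lam l).const_mul (a l)

lemma gegL_cross (lam : ℝ) (hlam : 0 < lam) (a : ℕ → ℝ) (j : ℕ) : ∀ n : ℕ,
    gegL lam (fun t => t * (∑ l ∈ Finset.range n, a l * gegenbauer lam l t) *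
      gegenbauer lam j t) = ∑ l ∈ Finset.range n, a l * gegJ lam l j
  | 0 => by simp [gegL]
  | (n + 1) => by
    rw [Finset.sum_range_succ, ← gegL_cross lam hlam a j n]
    have := gegL_lin lam hlam ((continuous_id.mul (gegS_cont lam a n)).mul (geg_cont lam j))
      (geg_tmul_cont lam n j) 1 (a n)
      (F := fun t => t * (∑ l ∈ Finset.range (n + 1), a l * gegenbauer lam l t) *
      gegenbauer lam j t) (by intro t; rw [Finset.sum_range_succ]; simp only [Pi.mul_apply, Pi.add_apply, id_eq]; ring)
    rw [this, one_mul]; rfl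

lemma gegL_cross' (lam : ℝ) (hlam : 0 < lam) (a : ℕ → ℝ) (m : ℕ) :
    gegL lam (fun t => t * (∑ l ∈ Finset.range (m + 1), a l * gegenbauer lam l t) *
      gegenbauer lam (m + 1) t) = a m * gegJ lam m (m + 1) := by
  rw [gegL_cross lam hlam, Finset.sum_range_succ, Finset.sum_eq_zero, zero_add]
  intro l hl
  rw [gegJ_far lam hlam l m (Finset.mem_range.1 hl), mul_zero]

lemma gegL_main (lam : ℝ) (hlam : 0 < lam) (a : ℕ → ℝ) : ∀ m : ℕ,
    gegL lam (fun t => t * (∑ l ∈ Finset.range (m + 1), a l * gegenbauer lam l t) ^ 2) =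
      ∑ l ∈ Finset.range m, gegJ lam l (l + 1) * (2 * a l * a (l + 1))
  | 0 => by
    have := gegL_lin lam hlam (geg_tmul_cont lam 0 0) (geg_tmul_cont lam 0 0) (a 0 ^ 2) 0
      (F := fun t => t * (∑ l ∈ Finset.range (0 + 1), a l * gegenbauer lam l t) ^ 2)
      (by intro t; simp; ring)
    rw [this]
    have h := gegJ_diag lam hlam 0
    rw [gegJ] at h
    rw [h]; simp
  | (m + 1) => by
    have hS := gegS_cont lam a (m + 1)
    have hC := geg_cont lam (m + 1)
    have h1 := gegL_lin lam hlam (f := fun t => t *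
        (∑ l ∈ Finset.range (m + 1), a l * gegenbauer lam l t) * gegenbauer lam (m + 1) t)
      ((continuous_id.mul hS).mul hC) (geg_tmul_cont lam (m + 1) (m + 1))
      (2 * a (m + 1)) (a (m + 1) ^ 2) (fun t => rfl)
    have h2 := gegL_lin lam hlam (f := fun t => t *
        (∑ l ∈ Finset.range (m + 1), a l * gegenbauer lam l t) ^ 2)
      (continuous_id.mul (hS.pow 2))
      ((((continuous_id.mul hS).mul hC).const_mul (2 * a (m + 1))).add
        ((geg_tmul_cont lam (m + 1) (m + 1)).const_mul (a (m + 1) ^ 2))) 1 1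
      (F := fun t => t * (∑ l ∈ Finset.range (m + 1 + 1), a l * gegenbauer lam l t) ^ 2)
      (by intro t; rw [Finset.sum_range_succ]; simp only [Pi.mul_apply, Pi.add_apply, id_eq]; ring)
    have h := gegJ_diag lam hlam (m + 1)
    rw [gegJ] at h
    rw [h, gegL_cross' lam hlam] at h1
    have h3 := h2.trans (congrArg (fun x => 1 * _ + 1 * x) h1)
    rw [h3, gegL_main lam hlam a m, Finset.sum_range_succ]
    ring

/-- The space-domain first moment of a zonal function `f = Σ_{l=0}^m a_l C_l^λ`,
written as a one-dimensional weighted integral. -/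
theorem first_moment_zonal (lam : ℝ) (hlam : 0 < lam) (m : ℕ) (a : ℕ → ℝ)
    (ha : a (m + 1) = 0) :
    ∫ t in (-1 : ℝ)..1,
        t * (∑ l ∈ Finset.range (m + 1), a l * gegenbauer lam l t) ^ 2 *
          (1 - t ^ 2) ^ (lam - 1 / 2) =
      Real.sqrt π * Real.Gamma (lam + 1 / 2) / Real.Gamma (lam + 1) *
        ∑ l ∈ Finset.range m,
          (lam ^ 2 / (((l : ℝ) + lam) * ((l : ℝ) + lam + 1))) *
            (Real.Gamma ((l : ℝ) + 2 * lam + 1) /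
              ((Nat.factorial l : ℝ) * Real.Gamma (2 * lam + 1))) *
            (2 * a l * a (l + 1)) := by
  have h := gegL_main lam hlam a m
  rw [gegL] at h
  rw [h, Finset.mul_sum]
  apply Finset.sum_congr rfl
  intro l _
  rw [gegJ_val lam hlam]
  ring
end

section
/- Let λ > 0 be real, m ≥ 1 an integer, and Φ_m(t) = Σ_{l=0}^{m} ((l+λ)/λ) C_l^λ(t). Then the space variance of Φ_m, defined as var_S(Φ_m) = (∫_{−1}^{1} Φ_m(t)² (1−t²)^{λ−1/2} dt / ∫_{−1}^{1} t·Φ_m(t)² (1−t²)^{λ−1/2} dt)² − 1, satisfies var_S(Φ_m) = ((2m+2λ+1)/(2m))² − 1; equivalently, ∫_{−1}^{1} Φ_m(t)² (1−t²)^{λ−1/2} dt = ((2m+2λ+1)/(2m)) · ∫_{−1}^{1} t·Φ_m(t)² (1−t²)^{λ−1/2} dt. -/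
open Real Finset

/-- `Φ_m = Σ_{l=0}^m ((l+λ)/λ) C_l^λ`, the (unnormalized) weighted scaling function. -/
noncomputable def PhiScaling (lam : ℝ) (m : ℕ) : ℝ → ℝ :=
  fun t => ∑ l ∈ Finset.range (m + 1), (((l : ℝ) + lam) / lam) * gegenbauer lam l t

open Polynomial in
/-- polynomial version of the Gegenbauer functions -/
noncomputable def GP (lam : ℝ) : ℕ → ℝ[X]
  | 0 => 1
  | 1 => C (2 * lam) * X
  | (l + 2) => C (((l : ℝ) + 2)⁻¹) * (C (2 * ((l : ℝ) + 1 + lam)) * (X * GP lam (l + 1))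
        - C ((l : ℝ) + 2 * lam) * GP lam l)

lemma GP_eval (lam : ℝ) (t : ℝ) : ∀ l, (GP lam l).eval t = gegenbauer lam l t
  | 0 => by simp [GP, gegenbauer]
  | 1 => by simp [GP, gegenbauer]
  | (l + 2) => by
    simp only [GP, gegenbauer, Polynomial.eval_mul, Polynomial.eval_sub, Polynomial.eval_C,
      Polynomial.eval_X, GP_eval lam t (l + 1), GP_eval lam t l]
    field_simp

lemma w_int (a : ℝ) (ha : -1 < a) :
    IntervalIntegrable (fun t : ℝ => (1 - t ^ 2) ^ a) MeasureTheory.volume (-1) 1 := by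
  have key : IntervalIntegrable (fun t : ℝ => (1 - t ^ 2) ^ a) MeasureTheory.volume 0 1 := by
    have h1 : IntervalIntegrable (fun t : ℝ => (1 - t) ^ a) MeasureTheory.volume 0 1 := by
      have := (intervalIntegral.intervalIntegrable_rpow' (a := 0) (b := 1) ha).comp_sub_left 1
      simpa using this.symm
    have h2 : ContinuousOn (fun t : ℝ => (1 + t) ^ a) (Set.uIcc 0 1) := by
      rw [Set.uIcc_of_le zero_le_one]
      apply ContinuousOn.rpow_const (by fun_prop)
      intro x hx
      left
      have := hx.1
      positivity
    refine (h1.mul_continuousOn h2).congr ?_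
    rw [Set.uIoc_of_le zero_le_one]
    intro x hx
    change (1 - x) ^ a * (1 + x) ^ a = (1 - x ^ 2) ^ a
    rw [← Real.mul_rpow (by linarith [hx.2]) (by linarith [hx.1])]
    congr 1
    ring
  have k2 : IntervalIntegrable (fun t : ℝ => (1 - t ^ 2) ^ a) MeasureTheory.volume (-1) 0 := by
    have := key.comp_sub_left 0
    simpa using this.symm
  exact k2.trans key

open Polynomial in
lemma pw_int (a : ℝ) (ha : -1 < a) (p : ℝ[X]) :
    IntervalIntegrable (fun t : ℝ => p.eval t * (1 - t ^ 2) ^ a) MeasureTheory.volume (-1) 1 :=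
  (w_int a ha).continuousOn_mul p.continuous.continuousOn

open Polynomial in
/-- the weighted integral functional -/
noncomputable def LW (a : ℝ) (ha : -1 < a) : ℝ[X] →ₗ[ℝ] ℝ where
  toFun p := ∫ t in (-1 : ℝ)..1, p.eval t * (1 - t ^ 2) ^ a
  map_add' p q := by
    rw [← intervalIntegral.integral_add (pw_int a ha p) (pw_int a ha q)]
    simp [add_mul]
  map_smul' c p := by
    simp [mul_assoc]

open Polynomial in
lemma LW_ibp (a : ℝ) (ha : -1 < a) (p : ℝ[X]) :
    LW a ha ((1 - X ^ 2) * derivative p - C (2 * (a + 1)) * (X * p)) = 0 := by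
  have := intervalIntegral.integral_eq_sub_of_hasDerivAt_of_le (a := -1) (b := 1)
    (f := fun t : ℝ => p.eval t * (1 - t ^ 2) ^ (a + 1))
    (f' := fun t => ((1 - X ^ 2) * derivative p - C (2 * (a + 1)) * (X * p)).eval t
      * (1 - t ^ 2) ^ a) (by norm_num) ?_ ?_ (pw_int a ha _)
  · change ∫ t in (-1 : ℝ)..1, _ = _
    rw [this]
    simp [Real.zero_rpow (show a + 1 ≠ 0 by linarith)]
  · apply ContinuousOn.mul p.continuous.continuousOn
    apply ContinuousOn.rpow_const (by fun_prop)
    intro x hx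
    right
    linarith
  · intro x hx
    have hpos : 0 < 1 - x ^ 2 := by nlinarith [hx.1, hx.2]
    have h1 : HasDerivAt (fun t : ℝ => 1 - t ^ 2) (-(2 * x)) x := by
      simpa using (hasDerivAt_pow 2 x).const_sub 1
    have h2 := (p.hasDerivAt x).mul (h1.rpow_const (p := a + 1) (Or.inl hpos.ne'))
    refine h2.congr_deriv ?_
    rw [Real.rpow_add hpos, Real.rpow_one]
    simp
    ring

lemma LW_one_pos (a : ℝ) (ha : -1 < a) : 0 < LW a ha 1 := by
  change 0 < ∫ t in (-1 : ℝ)..1, _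
  apply intervalIntegral.intervalIntegral_pos_of_pos_on (pw_int a ha 1) _ (by norm_num)
  intro x hx
  have hpos : 0 < 1 - x ^ 2 := by nlinarith [hx.1, hx.2]
  simp
  positivity

open Polynomial in
lemma GP_rec (lam : ℝ) (l : ℕ) : C ((l : ℝ) + 2) * GP lam (l + 2) =
    C (2 * ((l : ℝ) + 1 + lam)) * (X * GP lam (l + 1)) - C ((l : ℝ) + 2 * lam) * GP lam l := by
  rw [GP, ← mul_assoc, ← C_mul, mul_inv_cancel₀ (by positivity), C_1, one_mul]

open Polynomial in
lemma GP_der (lam : ℝ) : ∀ l : ℕ, (1 - X ^ 2) * derivative (GP lam l) =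
    C ((l : ℝ) + 2 * lam) * (X * GP lam l) - C ((l : ℝ) + 1) * GP lam (l + 1)
  | 0 => by simp [GP]
  | 1 => by
    have h := GP_rec lam 0
    have h1 : GP lam 1 = C (2 * lam) * X := by rw [GP]
    have h00 : GP lam 0 = 1 := by rw [GP]
    rw [h1, h00] at h
    rw [h1]
    simp only [derivative_mul, derivative_C, derivative_X, zero_mul, zero_add]
    norm_num at h ⊢
    simp only [map_add, map_mul, map_one, C_ofNat] at *
    linear_combination h
  | (l + 2) => by
    have h0 := GP_der lam l
    have h1 := GP_der lam (l + 1)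
    have r0 := GP_rec lam l
    have r1 := GP_rec lam (l + 1)
    have hd := congrArg derivative r0
    have hne : (C ((l : ℝ) + 2) : ℝ[X]) ≠ 0 := by
      rw [Ne, C_eq_zero]; positivity
    apply mul_left_cancel₀ hne
    simp only [derivative_sub, derivative_mul, derivative_C, derivative_X, zero_mul, zero_add,
      one_mul] at hd
    push_cast at *
    simp only [map_add, map_mul, map_one, C_ofNat] at *
    linear_combination (1 - X ^ 2) * hd + 2 * (C (l : ℝ) + 1 + C lam) * X * h1
      - (C (l : ℝ) + 2 * C lam) * h0 + (C (l : ℝ) + 2) * r1 - (C (l : ℝ) + 2 * C lam) * X * r0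

section
open Polynomial
variable (L : ℝ[X] →ₗ[ℝ] ℝ)

lemma L_C (c : ℝ) (p : ℝ[X]) : L (C c * p) = c * L p := by
  rw [← smul_eq_C_mul, map_smul, smul_eq_mul]

lemma L_rec (lam : ℝ) (l : ℕ) (q : ℝ[X]) : ((l : ℝ) + 2) * L (GP lam (l + 2) * q) =
    2 * ((l : ℝ) + 1 + lam) * L (X * GP lam (l + 1) * q) - ((l : ℝ) + 2 * lam) * L (GP lam l * q) := by
  rw [← L_C, ← L_C, ← L_C, ← map_sub]
  congr 1
  linear_combination q * GP_rec lam l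

lemma L_zero (lam : ℝ) (hlam : 0 < lam)
    (hL : ∀ p, L ((1 - X ^ 2) * derivative p - C (2 * lam + 1) * (X * p)) = 0) :
    ∀ l : ℕ, L (GP lam (l + 1)) = 0 := by
  have key : ∀ l : ℕ, ((l : ℝ) - 1) * L (X * GP lam l) = (l + 1) * L (GP lam (l + 1)) := by
    intro l
    have h := hL (GP lam l)
    rw [GP_der] at h
    simp only [map_sub, L_C] at h
    linarith
  have h1 : L (GP lam 1) = 0 := by
    have := key 0
    simp only [GP, L_C, mul_one, zero_add] at this ⊢
    push_cast at this
    have h : (2 * lam + 1) * L X = 0 := by linarith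
    have : L X = 0 := (mul_eq_zero.1 h).resolve_left (by positivity)
    rw [this, mul_zero]
  have h2 : L (GP lam 2) = 0 := by
    have := key 1
    push_cast at this
    norm_num at this
    exact this
  intro l
  induction l using Nat.strong_induction_on with
  | _ l ih =>
  match l with
  | 0 => exact h1
  | 1 => exact h2
  | l + 2 =>
    have hk := key (l + 2)
    have hr := L_rec L lam (l + 1) 1
    have h0 := ih l (by omega)
    simp only [mul_one, h0, mul_zero, sub_zero] at hr
    push_cast at hk hr
    have e : l + 2 + 1 = l + 1 + 2 := rfl
    rw [show l + 1 + 1 = l + 2 from rfl] at hr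
    rw [e] at hk ⊢
    have : ((l : ℝ) + 3) * (l + 3 + 2 * lam) * L (GP lam (l + 1 + 2)) = 0 := by
      linear_combination -(l + 1) * hr - 2 * (l + 2 + lam) * hk
    exact (mul_eq_zero.1 this).resolve_left (by positivity)

lemma L_orth (lam : ℝ) (hlam : 0 < lam) (h0 : ∀ l : ℕ, L (GP lam (l + 1)) = 0) :
    ∀ k l : ℕ, k < l → L (GP lam k * GP lam l) = 0 := by
  intro k
  induction k using Nat.strong_induction_on with
  | _ k ih =>
  intro l hl
  obtain ⟨l, rfl⟩ : ∃ j, l = j + 1 := ⟨l - 1, by omega⟩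
  match k with
  | 0 => simpa [GP] using h0 l
  | 1 =>
    obtain ⟨j, rfl⟩ : ∃ j, l = j + 1 := ⟨l - 1, by omega⟩
    have hr := L_rec L lam (j + 1) 1
    simp only [mul_one] at hr
    rw [h0 j, show j + 1 + 2 = (j + 2) + 1 from rfl, h0 (j + 2)] at hr
    have : L (X * GP lam (j + 1 + 1)) = 0 := by
      have : (2 * (((j + 1 : ℕ) : ℝ) + 1 + lam)) * L (X * GP lam (j + 1 + 1)) = 0 := by linarith
      exact (mul_eq_zero.1 this).resolve_left (by positivity)
    rw [GP, mul_assoc, L_C, this, mul_zero]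
  | k + 2 =>
    obtain ⟨j, rfl⟩ : ∃ j, l = j + 1 := ⟨l - 1, by omega⟩
    have r1 := L_rec L lam k (GP lam (j + 1 + 1))
    have r2 := L_rec L lam (j + 1) (GP lam (k + 1))
    have e1 := ih (k + 1) (by omega) (j + 1 + 2) (by omega)
    have e2 := ih (k + 1) (by omega) (j + 1) (by omega)
    have e3 := ih k (by omega) (j + 1 + 1) (by omega)
    rw [mul_comm] at e1 e2
    rw [e1, e2] at r2
    rw [e3, show X * GP lam (k + 1) * GP lam (j + 1 + 1)
      = X * GP lam (j + 1 + 1) * GP lam (k + 1) by ring] at r1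
    have : L (X * GP lam (j + 1 + 1) * GP lam (k + 1)) = 0 := by
      have : (2 * (((j + 1 : ℕ) : ℝ) + 1 + lam)) *
        L (X * GP lam (j + 1 + 1) * GP lam (k + 1)) = 0 := by linarith
      exact (mul_eq_zero.1 this).resolve_left (by positivity)
    rw [this] at r1
    have : ((k : ℝ) + 2) * L (GP lam (k + 2) * GP lam (j + 1 + 1)) = 0 := by linarith
    exact (mul_eq_zero.1 this).resolve_left (by positivity)

/-- polynomial version of Phi -/
noncomputable def PP (lam : ℝ) (m : ℕ) : ℝ[X] :=
  ∑ l ∈ Finset.range (m + 1), C (((l : ℝ) + lam) / lam) * GP lam l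

lemma PP_succ (lam : ℝ) (m : ℕ) : PP lam (m + 1) =
    PP lam m + C (((m : ℝ) + 1 + lam) / lam) * GP lam (m + 1) := by
  rw [PP, Finset.sum_range_succ, ← PP]; push_cast; rfl

lemma L_main (lam : ℝ) (hlam : 0 < lam) (h0 : ∀ l : ℕ, L (GP lam (l + 1)) = 0)
    (h1 : 0 < L 1) (m : ℕ) :
    0 < L (GP lam m * GP lam m) ∧
    L (PP lam m ^ 2) = L (GP lam m * GP lam m) * (m + lam) / lam ^ 2 *
      ((2 * lam + m) * (2 * m + 2 * lam + 1) / (2 * (2 * lam + 1))) ∧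
    L (X * PP lam m ^ 2) = L (GP lam m * GP lam m) * (m + lam) / lam ^ 2 *
      ((2 * lam + m) * m / (2 * lam + 1)) := by
  have orth := L_orth L lam hlam h0
  have orth' : ∀ k l : ℕ, k < l → L (GP lam l * GP lam k) = 0 := fun k l h => by
    rw [mul_comm]; exact orth k l h
  have xk : ∀ k l : ℕ, k < l → L (X * GP lam k * GP lam (l + 1)) = 0 := by
    intro k l hkl
    have r := L_rec L lam l (GP lam k)
    rw [orth' k l hkl, orth' k (l + 2) (by omega),
      show X * GP lam (l + 1) * GP lam k = X * GP lam k * GP lam (l + 1) by ring] at r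
    have : (2 * ((l : ℝ) + 1 + lam)) * L (X * GP lam k * GP lam (l + 1)) = 0 := by linarith
    exact (mul_eq_zero.1 this).resolve_left (by positivity)
  have xs : ∀ k : ℕ, L (X * GP lam k * GP lam k) = 0 := by
    intro k
    cases k with
    | zero =>
      have h := h0 0
      simp only [GP, L_C, mul_one, zero_add] at h ⊢
      exact (mul_eq_zero.1 h).resolve_left (by positivity)
    | succ k =>
      have r := L_rec L lam k (GP lam (k + 1))
      rw [orth k (k + 1) (by omega), orth' (k + 1) (k + 2) (by omega)] at r
      have : (2 * ((k : ℝ) + 1 + lam)) * L (X * GP lam (k + 1) * GP lam (k + 1)) = 0 := by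
        linarith
      exact (mul_eq_zero.1 this).resolve_left (by positivity)
  have xn : ∀ k : ℕ, 2 * (k + lam) * L (X * GP lam k * GP lam (k + 1)) =
      (k + 1) * L (GP lam (k + 1) * GP lam (k + 1)) := by
    intro k
    cases k with
    | zero =>
      simp only [GP, zero_add, mul_one]
      rw [show X * (C (2 * lam) * X) = C (2 * lam) * (X * X) by ring,
        show C (2 * lam) * X * (C (2 * lam) * X) = C (2 * lam) * (C (2 * lam) * (X * X)) by ring]
      simp only [L_C]
      push_cast
      ring
    | succ k =>
      have r := L_rec L lam k (GP lam (k + 2))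
      rw [orth k (k + 2) (by omega)] at r
      push_cast
      rw [show k + 1 + 1 = k + 2 from rfl]
      linear_combination -r
  have xn' : ∀ k : ℕ, 2 * (k + 1 + lam) * L (X * GP lam k * GP lam (k + 1)) =
      (k + 2 * lam) * L (GP lam k * GP lam k) := by
    intro k
    have r := L_rec L lam k (GP lam k)
    rw [orth' k (k + 2) (by omega),
      show X * GP lam (k + 1) * GP lam k = X * GP lam k * GP lam (k + 1) by ring] at r
    linear_combination -r
  have PP0 : PP lam 0 = 1 := by
    simp [PP, GP, hlam.ne']
  have p0 : ∀ m : ℕ, ∀ l, m < l → L (PP lam m * GP lam l) = 0 := by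
    intro m l hl
    rw [PP, Finset.sum_mul, map_sum]
    apply Finset.sum_eq_zero
    intro i hi
    rw [mul_assoc, L_C, orth i l (by have := Finset.mem_range.1 hi; omega), mul_zero]
  have px : ∀ m : ℕ, ∀ l, m < l → L (X * PP lam m * GP lam (l + 1)) = 0 := by
    intro m l hl
    rw [PP, Finset.mul_sum, Finset.sum_mul, map_sum]
    apply Finset.sum_eq_zero
    intro i hi
    rw [show X * (C ((i + lam) / lam) * GP lam i) * GP lam (l + 1)
      = C ((i + lam) / lam) * (X * GP lam i * GP lam (l + 1)) by ring,
      L_C, xk i l (by have := Finset.mem_range.1 hi; omega), mul_zero]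
  have p1 : ∀ m : ℕ, L (X * PP lam m * GP lam (m + 1)) =
      (m + lam) / lam * L (X * GP lam m * GP lam (m + 1)) := by
    intro m
    cases m with
    | zero =>
      rw [PP0, GP]
      simp [hlam.ne']
    | succ m =>
      rw [PP_succ, mul_add, add_mul, map_add, px m (m + 1) (by omega), zero_add, ← L_C]
      push_cast
      congr 1
      ring
  induction m with
  | zero =>
    rw [PP0, GP]
    have hX := xs 0
    simp only [GP, mul_one] at hX
    refine ⟨by simpa using h1, ?_, ?_⟩
    · simp only [one_pow, mul_one]
      push_cast
      field_simp
      ring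
    · simp [hX]
  | succ m ih =>
    obtain ⟨hp, hA, hB⟩ := ih
    have a1 := xn m
    have a2 := xn' m
    have hH : L (GP lam (m + 1) * GP lam (m + 1)) =
        (m + 2 * lam) * (m + lam) / ((m + 1) * (m + 1 + lam)) * L (GP lam m * GP lam m) := by
      field_simp
      linear_combination -(m + 1 + lam) * a1 + (m + lam) * a2
    have hT : L (X * GP lam m * GP lam (m + 1)) =
        (m + 2 * lam) / (2 * (m + 1 + lam)) * L (GP lam m * GP lam m) := by
      field_simp
      linear_combination a2
    refine ⟨?_, ?_, ?_⟩
    · rw [hH]; positivity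
    · rw [PP_succ, show (PP lam m + C ((m + 1 + lam) / lam) * GP lam (m + 1)) ^ 2 =
        PP lam m ^ 2 + (C ((m + 1 + lam) / lam) * (PP lam m * GP lam (m + 1))
        + C ((m + 1 + lam) / lam) * (PP lam m * GP lam (m + 1)))
        + C ((m + 1 + lam) / lam) * (C ((m + 1 + lam) / lam) * (GP lam (m + 1) * GP lam (m + 1)))
        by ring]
      simp only [map_add, L_C]
      rw [p0 m (m + 1) (by omega), hA, hH]
      push_cast
      field_simp
      ring
    · rw [PP_succ, show X * (PP lam m + C ((m + 1 + lam) / lam) * GP lam (m + 1)) ^ 2 =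
        X * PP lam m ^ 2 + (C ((m + 1 + lam) / lam) * (X * PP lam m * GP lam (m + 1))
        + C ((m + 1 + lam) / lam) * (X * PP lam m * GP lam (m + 1)))
        + C ((m + 1 + lam) / lam) * (C ((m + 1 + lam) / lam) *
          (X * GP lam (m + 1) * GP lam (m + 1)))
        by ring]
      simp only [map_add, L_C]
      rw [xs, p1, hB, hH, hT]
      push_cast
      field_simp
      ring

end

lemma PP_eval (lam : ℝ) (m : ℕ) (t : ℝ) : (PP lam m).eval t = PhiScaling lam m t := by
  simp [PP, PhiScaling, Polynomial.eval_finset_sum, GP_eval]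

/-- The space variance of the weighted scaling function `Φ_m`:
`var_S(Φ_m) = ((2m+2λ+1)/(2m))² − 1`, equivalently
`∫ Φ_m² w = ((2m+2λ+1)/(2m)) ∫ t Φ_m² w` with `w(t) = (1−t²)^{λ−1/2}`. -/
theorem space_variance_PhiScaling (lam : ℝ) (hlam : 0 < lam) (m : ℕ) (hm : 1 ≤ m) :
    ((∫ t in (-1 : ℝ)..1, (PhiScaling lam m t) ^ 2 * (1 - t ^ 2) ^ (lam - 1 / 2)) /
          (∫ t in (-1 : ℝ)..1,
            t * (PhiScaling lam m t) ^ 2 * (1 - t ^ 2) ^ (lam - 1 / 2))) ^ 2 - 1 =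
        ((2 * (m : ℝ) + 2 * lam + 1) / (2 * (m : ℝ))) ^ 2 - 1 ∧
      (∫ t in (-1 : ℝ)..1, (PhiScaling lam m t) ^ 2 * (1 - t ^ 2) ^ (lam - 1 / 2)) =
        ((2 * (m : ℝ) + 2 * lam + 1) / (2 * (m : ℝ))) *
          ∫ t in (-1 : ℝ)..1,
            t * (PhiScaling lam m t) ^ 2 * (1 - t ^ 2) ^ (lam - 1 / 2) := by
  have ha : -1 < lam - 1 / 2 := by linarith
  have h0 := L_zero (LW (lam - 1 / 2) ha) lam hlam (fun p => by
    have := LW_ibp (lam - 1 / 2) ha p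
    rwa [show 2 * (lam - 1 / 2 + 1) = 2 * lam + 1 by ring] at this)
  obtain ⟨hp, hA, hB⟩ := L_main (LW (lam - 1 / 2) ha) lam hlam h0 (LW_one_pos _ ha) m
  have eA : (∫ t in (-1 : ℝ)..1, (PhiScaling lam m t) ^ 2 * (1 - t ^ 2) ^ (lam - 1 / 2)) =
      LW (lam - 1 / 2) ha (PP lam m ^ 2) := by
    change _ = ∫ t in (-1 : ℝ)..1, _
    simp only [Polynomial.eval_pow, PP_eval]
  have eB : (∫ t in (-1 : ℝ)..1, t * (PhiScaling lam m t) ^ 2 * (1 - t ^ 2) ^ (lam - 1 / 2)) =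
      LW (lam - 1 / 2) ha (Polynomial.X * PP lam m ^ 2) := by
    change _ = ∫ t in (-1 : ℝ)..1, _
    simp only [Polynomial.eval_pow, Polynomial.eval_mul, Polynomial.eval_X, PP_eval]
  have hm' : (0 : ℝ) < m := by exact_mod_cast hm
  rw [eA, eB]
  have hBpos : 0 < LW (lam - 1 / 2) ha (Polynomial.X * PP lam m ^ 2) := by
    rw [hB]; positivity
  have hAB : LW (lam - 1 / 2) ha (PP lam m ^ 2) = ((2 * (m : ℝ) + 2 * lam + 1) / (2 * (m : ℝ))) *
      LW (lam - 1 / 2) ha (Polynomial.X * PP lam m ^ 2) := by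
    rw [hA, hB]
    field_simp
  refine ⟨?_, hAB⟩
  rw [hAB, mul_div_cancel_right₀ _ hBpos.ne']
end

section
/- Let n ≥ 2, λ = (n−1)/2, j ≥ 1, and let φ_j(t) = 2^{−nj/2} Σ_{l=0}^{2^{j−1}−1} ((l+λ)/λ) C_l^λ(t). Then for every x ∈ S^n, (1/Σ_n) ∫_{S^n} φ_j(⟨x,y⟩)² dσ(y) = (n+2^j−2)·(n+2^{j−1}−2)! / (2^{nj}·n!·(2^{j−1}−1)!). -/
open Real Finset MeasureTheory Metric
open scoped RealInnerProductSpace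

/-- The weighted scaling function of level `j` on the `n`-sphere, as a zonal function:
`φ_j(t) = 2^{−nj/2} Σ_{l=0}^{2^{j−1}−1} ((l+λ)/λ) C_l^λ(t)` with `λ = (n−1)/2`. -/
noncomputable def scalingFn (n j : ℕ) : ℝ → ℝ :=
  fun t => (2 : ℝ) ^ (-((n * j : ℕ) : ℝ) / 2) *
    ∑ l ∈ Finset.range (2 ^ (j - 1)),
      (((l : ℝ) + ((n : ℝ) - 1) / 2) / (((n : ℝ) - 1) / 2)) *
        gegenbauer (((n : ℝ) - 1) / 2) l t

namespace ScalingAux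

/-- Half-line Gaussian moments. -/
noncomputable def J (k : ℕ) : ℝ := ∫ r in Set.Ioi (0 : ℝ), r ^ k * Real.exp (-r ^ 2)

/-- Full-line Gaussian moments. -/
noncomputable def G (k : ℕ) : ℝ := ∫ r : ℝ, r ^ k * Real.exp (-r ^ 2)

lemma J_eq (k : ℕ) : J k = Real.Gamma (((k : ℝ) + 1) / 2) / 2 := by
  have h := integral_rpow_mul_exp_neg_rpow (p := 2) (q := (k : ℝ)) (by norm_num)
    (by have : (0 : ℝ) ≤ k := Nat.cast_nonneg k
        linarith)
  unfold J
  rw [div_eq_inv_mul, ← one_div, ← h]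
  refine setIntegral_congr_fun measurableSet_Ioi fun r _ => ?_
  simp

lemma J_pos (k : ℕ) : 0 < J k := by
  rw [J_eq]
  have : 0 < Real.Gamma (((k : ℝ) + 1) / 2) := Real.Gamma_pos_of_pos (by positivity)
  positivity

lemma J_succ (k : ℕ) : J (k + 2) = ((k : ℝ) + 1) / 2 * J k := by
  rw [J_eq, J_eq]
  have : (((k + 2 : ℕ) : ℝ) + 1) / 2 = ((k : ℝ) + 1) / 2 + 1 := by push_cast; ring
  rw [this, Real.Gamma_add_one (by positivity)]
  ring

lemma G_even {k : ℕ} (hk : Even k) : G k = 2 * J k := by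
  unfold G J
  rw [← integral_comp_abs (f := fun r : ℝ => r ^ k * Real.exp (-r ^ 2))]
  simp [hk.pow_abs]

lemma G_odd {k : ℕ} (hk : Odd k) : G k = 0 := by
  have h := integral_neg_eq_self (fun r : ℝ => r ^ k * Real.exp (-r ^ 2)) volume
  simp only [hk.neg_pow, neg_sq, neg_mul, integral_neg] at h
  have h2 : -G k = G k := by unfold G; simpa [neg_mul] using h
  linarith

lemma G_succ (k : ℕ) : G (k + 2) = ((k : ℝ) + 1) / 2 * G k := by
  rcases Nat.even_or_odd k with hk | hk
  · rw [G_even hk, G_even (by simpa [Nat.even_add] using hk), J_succ]; ring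
  · rw [G_odd hk, G_odd (by simpa [Nat.odd_add, parity_simps] using hk)]; ring

lemma G_zero : G 0 = √π := by
  have h := integral_gaussian 1
  simpa [G] using h

/-- Moments of the zonal variable on the sphere. -/
noncomputable def M (n : ℕ) (x : sphere (0 : EuclideanSpace ℝ (Fin (n + 1))) 1) (k : ℕ) : ℝ :=
  ∫ y : sphere (0 : EuclideanSpace ℝ (Fin (n + 1))) 1,
    ⟪(x : EuclideanSpace ℝ (Fin (n + 1))), (y : EuclideanSpace ℝ (Fin (n + 1)))⟫ ^ k
    ∂((volume : Measure (EuclideanSpace ℝ (Fin (n + 1)))).toSphere)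

lemma gauss_polar (n : ℕ) (x : sphere (0 : EuclideanSpace ℝ (Fin (n + 1))) 1) (k : ℕ) :
    ∫ y : EuclideanSpace ℝ (Fin (n + 1)),
      ⟪(x : EuclideanSpace ℝ (Fin (n + 1))), y⟫ ^ k * Real.exp (-‖y‖ ^ 2) =
    M n x k * J (n + k) := by
  let E := EuclideanSpace ℝ (Fin (n + 1))
  let μ : Measure E := volume
  have hd : Module.finrank ℝ E = n + 1 := by simp [E]
  calc
    _ = ∫ y : ({(0)}ᶜ : Set E), ⟪(x : E), y.1⟫ ^ k * Real.exp (-‖y.1‖ ^ 2) ∂(μ.comap (↑)) := by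
      rw [integral_subtype_comap (measurableSet_singleton _).compl
        (fun y : E => ⟪(x : E), y⟫ ^ k * Real.exp (-‖y‖ ^ 2)),
        restrict_compl_singleton]
    _ = ∫ z : sphere (0 : E) 1 × Set.Ioi (0 : ℝ),
          ⟪(x : E), z.1.1⟫ ^ k * (z.2.1 ^ k * Real.exp (-z.2.1 ^ 2))
          ∂μ.toSphere.prod (.volumeIoiPow (Module.finrank ℝ E - 1)) := by
      rw [← μ.measurePreserving_homeomorphUnitSphereProd.integral_comp
        (Homeomorph.measurableEmbedding _)]
      refine integral_congr_ae (Filter.Eventually.of_forall fun y => ?_)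
      have hy : ‖y.1‖ ≠ 0 := norm_ne_zero_iff.mpr y.2
      simp only [homeomorphUnitSphereProd_apply_snd_coe, homeomorphUnitSphereProd_apply_fst_coe,
        inner_smul_right]
      rw [mul_pow, inv_pow]
      field_simp
    _ = M n x k * ∫ r : Set.Ioi (0 : ℝ), (r.1 ^ k * Real.exp (-r.1 ^ 2))
          ∂(.volumeIoiPow (Module.finrank ℝ E - 1)) := by
      rw [integral_prod_mul (fun z : sphere (0 : E) 1 => ⟪(x : E), z.1⟫ ^ k)
        (fun r : Set.Ioi (0 : ℝ) => (r.1 ^ k * Real.exp (-r.1 ^ 2)))]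
      rfl
    _ = _ := by
      congr 1
      simp only [Measure.volumeIoiPow, ENNReal.ofReal]
      rw [integral_withDensity_eq_integral_smul,
        integral_subtype_comap measurableSet_Ioi fun a : ℝ ↦
          Real.toNNReal (a ^ (Module.finrank ℝ E - 1)) • (a ^ k * Real.exp (-a ^ 2))]
      · unfold J
        refine setIntegral_congr_fun measurableSet_Ioi fun r hr => ?_
        simp only [NNReal.smul_def]
        rw [Real.coe_toNNReal _ (pow_nonneg (le_of_lt hr) _), hd, smul_eq_mul]
        simp only [Nat.add_sub_cancel]
        ring
      · exact (measurable_subtype_coe.pow_const _).real_toNNReal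

lemma gauss_prod (n : ℕ) (x : sphere (0 : EuclideanSpace ℝ (Fin (n + 1))) 1) (k : ℕ) :
    ∫ y : EuclideanSpace ℝ (Fin (n + 1)),
      ⟪(x : EuclideanSpace ℝ (Fin (n + 1))), y⟫ ^ k * Real.exp (-‖y‖ ^ 2) =
    G k * √π ^ n := by
  have hx : ‖(x : EuclideanSpace ℝ (Fin (n + 1)))‖ = 1 := by simp
  obtain ⟨b, hb⟩ := Orthonormal.exists_orthonormalBasis_extension_of_card_eq (𝕜 := ℝ)
    (E := EuclideanSpace ℝ (Fin (n + 1))) (ι := Fin (n + 1)) (by simp)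
    (v := fun _ => (x : EuclideanSpace ℝ (Fin (n + 1)))) (s := {0})
    (by
      rw [orthonormal_iff_ite]
      rintro ⟨i, hi⟩ ⟨j, hj⟩
      obtain rfl : i = 0 := hi
      obtain rfl : j = 0 := hj
      simp)
  have hb0 : b 0 = x := hb 0 rfl
  have h1 := b.measurePreserving_repr_symm.integral_comp
    b.repr.symm.toHomeomorph.measurableEmbedding
    (fun y : EuclideanSpace ℝ (Fin (n + 1)) =>
      ⟪(x : EuclideanSpace ℝ (Fin (n + 1))), y⟫ ^ k * Real.exp (-‖y‖ ^ 2))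
  rw [← h1]
  rw [← (PiLp.volume_preserving_toLp (Fin (n + 1))).integral_comp
    (MeasurableEquiv.toLp 2 (Fin (n + 1) → ℝ)).measurableEmbedding]
  have h2 : ∀ y : Fin (n + 1) → ℝ,
      ⟪(x : EuclideanSpace ℝ (Fin (n + 1))), b.repr.symm (WithLp.toLp 2 y)⟫ ^ k *
        Real.exp (-‖b.repr.symm (WithLp.toLp 2 y)‖ ^ 2) =
      ∏ i, (fun (i : Fin (n + 1)) (t : ℝ) =>
        (if i = 0 then t ^ k else 1) * Real.exp (-t ^ 2)) i (y i) := by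
    intro y
    rw [← hb0, ← b.repr_apply_apply, LinearIsometryEquiv.apply_symm_apply,
      LinearIsometryEquiv.norm_map, EuclideanSpace.norm_sq_eq, Finset.prod_mul_distrib,
      ← Real.exp_sum]
    simp
  simp_rw [h2]
  rw [integral_fintype_prod_volume_eq_prod (fun (i : Fin (n + 1)) (t : ℝ) =>
        (if i = 0 then t ^ k else 1) * Real.exp (-t ^ 2)), Fin.prod_univ_succ]
  have h3 : ∫ t : ℝ, Real.exp (-t ^ 2) = √π := by
    have h := integral_gaussian 1
    simpa using h
  simp [Fin.succ_ne_zero, h3, G]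

lemma M_mul (n : ℕ) (x : sphere (0 : EuclideanSpace ℝ (Fin (n + 1))) 1) (k : ℕ) :
    M n x k * J (n + k) = G k * √π ^ n := by
  rw [← gauss_polar, gauss_prod]

lemma M_zero (n : ℕ) (x : sphere (0 : EuclideanSpace ℝ (Fin (n + 1))) 1) :
    M n x 0 = 2 * π ^ (((n : ℝ) - 1) / 2 + 1) / Real.Gamma (((n : ℝ) - 1) / 2 + 1) := by
  have h := M_mul n x 0
  have h1 : ((n : ℝ) - 1) / 2 + 1 = ((n : ℝ) + 1) / 2 := by ring
  rw [add_zero, J_eq, G_zero] at h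
  have hG : 0 < Real.Gamma (((n : ℝ) + 1) / 2) := Real.Gamma_pos_of_pos (by positivity)
  have h2 : π ^ (((n : ℝ) + 1) / 2) = √π * √π ^ n := by
    rw [Real.sqrt_eq_rpow, ← Real.rpow_natCast, ← Real.rpow_mul pi_pos.le,
      ← Real.rpow_add pi_pos]
    congr 1
    ring
  rw [h1, h2, ← h]
  field_simp

lemma M_one (n : ℕ) (x : sphere (0 : EuclideanSpace ℝ (Fin (n + 1))) 1) :
    M n x 1 = 0 := by
  have h := M_mul n x 1
  rw [G_odd odd_one, zero_mul] at h
  exact (mul_eq_zero.mp h).resolve_right (J_pos _).ne'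

lemma M_succ (n : ℕ) (x : sphere (0 : EuclideanSpace ℝ (Fin (n + 1))) 1) (k : ℕ) :
    ((n : ℝ) + k + 1) * M n x (k + 2) = ((k : ℝ) + 1) * M n x k := by
  have h := M_mul n x k
  have h2 := M_mul n x (k + 2)
  rw [← add_assoc, J_succ, G_succ, mul_assoc (_ / 2), ← h] at h2
  have := J_pos (n + k)
  push_cast at h2
  apply mul_right_cancel₀ this.ne'
  linarith

open Polynomial in
/-- Gegenbauer polynomials as polynomials. -/
noncomputable def P (lam : ℝ) : ℕ → ℝ[X]
  | 0 => 1
  | 1 => C (2 * lam) * X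
  | (l + 2) => C (1 / ((l : ℝ) + 2)) * (C (2 * ((l : ℝ) + 1 + lam)) * X * P lam (l + 1)
        - C ((l : ℝ) + 2 * lam) * P lam l)

lemma P_eval (lam : ℝ) (t : ℝ) (l : ℕ) : (P lam l).eval t = gegenbauer lam l t := by
  induction l using Nat.twoStepInduction with
  | zero => simp [P, gegenbauer]
  | one => simp [P, gegenbauer]
  | more l h1 h2 => simp [P, gegenbauer, h1, h2]; ring

open Polynomial in
lemma P_rec (lam : ℝ) (l : ℕ) : C ((l : ℝ) + 2) * P lam (l + 2) =
    C (2 * ((l : ℝ) + 1 + lam)) * X * P lam (l + 1) - C ((l : ℝ) + 2 * lam) * P lam l := by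
  have h : ((l : ℝ) + 2) ≠ 0 := by positivity
  rw [P, ← mul_assoc, ← C_mul, mul_one_div_cancel h, C_1, one_mul]

open Polynomial in
lemma P_PQ (lam : ℝ) (l : ℕ) :
    derivative (P lam (l + 1)) - X * derivative (P lam l) = C ((l : ℝ) + 2 * lam) * P lam l ∧
    X * derivative (P lam (l + 1)) - derivative (P lam l) = C ((l : ℝ) + 1) * P lam (l + 1) := by
  induction l with
  | zero => simp [P, mul_comm]
  | succ l ih =>
    obtain ⟨hP, hQ⟩ := ih
    have hr := P_rec lam l
    have hd := congrArg derivative hr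
    simp only [derivative_mul, derivative_sub, derivative_C, derivative_X, zero_mul, zero_add,
      mul_one] at hd
    have hne : C ((l : ℝ) + 2) ≠ 0 := by
      rw [Ne, C_eq_zero]; positivity
    simp only [C_add, C_mul, map_natCast, map_ofNat, map_one, Nat.cast_add, Nat.cast_one] at *
    have h1 : derivative (P lam (l + 1 + 1)) - X * derivative (P lam (l + 1)) =
        ((l : ℝ[X]) + 1 + 2 * C lam) * P lam (l + 1) := by
      apply mul_left_cancel₀ hne
      linear_combination hd + ((l : ℝ[X]) + 2 * C lam) * hQ
    refine ⟨h1, ?_⟩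
    linear_combination X * h1 - hP + X * hQ - hr

open Polynomial in
lemma P_ode (lam : ℝ) (l : ℕ) :
    (1 - X ^ 2) * derivative (derivative (P lam l)) - C (2 * lam + 1) * X * derivative (P lam l) =
      - C ((l : ℝ) * (l + 2 * lam)) * P lam l := by
  cases l with
  | zero => simp [P]
  | succ l =>
    obtain ⟨hP, hQ⟩ := P_PQ lam l
    have h : (1 - X ^ 2) * derivative (P lam (l + 1)) =
      C ((l : ℝ) + 2 * lam) * P lam l - C ((l : ℝ) + 1) * X * P lam (l + 1) := by
      linear_combination hP - X * hQ
    have hd := congrArg derivative h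
    simp only [derivative_mul, derivative_sub, derivative_C, derivative_X, zero_mul, zero_add,
      mul_one, derivative_one, derivative_pow] at hd
    simp only [C_add, C_mul, map_natCast, map_ofNat, map_one, Nat.cast_add, Nat.cast_one,
      Nat.cast_ofNat] at *
    linear_combination hd - ((l : ℝ[X]) + 2 * C lam) * hQ

/-- Abstract functional. -/
structure IsGeg (n : ℕ) (L : Polynomial ℝ →ₗ[ℝ] ℝ) : Prop where
  one : L Polynomial.X = 0
  succ : ∀ k : ℕ, ((n : ℝ) + k + 1) * L (Polynomial.X ^ (k + 2)) =
    ((k : ℝ) + 1) * L (Polynomial.X ^ k)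

open Polynomial in
lemma IsGeg.parts {n : ℕ} {L : ℝ[X] →ₗ[ℝ] ℝ} (h : IsGeg n L) (p : ℝ[X]) :
    L ((1 - X ^ 2) * derivative p - C (n : ℝ) * X * p) = 0 := by
  induction p using Polynomial.induction_on' with
  | add p q hp hq =>
    rw [← add_zero (0 : ℝ)]
    nth_rewrite 1 [← hp]
    rw [← hq, ← map_add]
    congr 1
    rw [derivative_add]
    ring
  | monomial k a =>
    rw [← C_mul_X_pow_eq_monomial]
    rcases k with _ | k
    · have : (1 - X ^ 2) * derivative (C a * X ^ 0) - C (n : ℝ) * X * (C a * X ^ 0) =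
        (-(n * a) : ℝ) • (X : ℝ[X]) := by
        simp [smul_eq_C_mul]; ring
      rw [this, map_smul, h.one, smul_zero]
    · have : (1 - X ^ 2) * derivative (C a * X ^ (k + 1)) - C (n : ℝ) * X * (C a * X ^ (k + 1)) =
        a • (((k : ℝ) + 1) • (X : ℝ[X]) ^ k - ((n : ℝ) + k + 1) • (X : ℝ[X]) ^ (k + 2)) := by
        simp [smul_eq_C_mul]; ring
      rw [this, map_smul, map_sub, map_smul, map_smul]
      simp only [smul_eq_mul]
      rw [h.succ]
      simp

open Polynomial in
lemma IsGeg.orth {n : ℕ} {L : ℝ[X] →ₗ[ℝ] ℝ} (h : IsGeg n L) (hn : 2 ≤ n) (lam : ℝ)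
    (hlam : lam = ((n : ℝ) - 1) / 2) {l m : ℕ} (hlm : l ≠ m) :
    L (P lam l * P lam m) = 0 := by
  have hp := h.parts (P lam l * derivative (P lam m) - derivative (P lam l) * P lam m)
  have hl := P_ode lam l
  have hm := P_ode lam m
  have hN : (n : ℝ) = 2 * lam + 1 := by rw [hlam]; ring
  have key : (1 - X ^ 2) * derivative (P lam l * derivative (P lam m) -
      derivative (P lam l) * P lam m) - C (n : ℝ) * X * (P lam l * derivative (P lam m) -
      derivative (P lam l) * P lam m) =
      (((l : ℝ) * (l + 2 * lam)) - ((m : ℝ) * (m + 2 * lam))) • (P lam l * P lam m) := by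
    rw [smul_eq_C_mul, hN, C_sub]
    simp only [derivative_sub, derivative_mul]
    linear_combination P lam l * hm - P lam m * hl
  rw [key, map_smul, smul_eq_mul] at hp
  refine (mul_eq_zero.mp hp).resolve_left ?_
  have h1 : ((l : ℝ) * (l + 2 * lam)) - ((m : ℝ) * (m + 2 * lam)) =
      ((l : ℝ) - m) * (l + m + 2 * lam) := by ring
  rw [h1]
  have h2 : (l : ℝ) - m ≠ 0 := by
    rw [sub_ne_zero]; exact_mod_cast hlm
  have h3 : (0 : ℝ) < lam := by
    have : (2 : ℝ) ≤ n := by exact_mod_cast hn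
    rw [hlam]; linarith
  exact mul_ne_zero h2 (by positivity)

open Polynomial in
lemma IsGeg.norm {n : ℕ} {L : ℝ[X] →ₗ[ℝ] ℝ} (h : IsGeg n L) (hn : 2 ≤ n) (lam : ℝ)
    (hlam : lam = ((n : ℝ) - 1) / 2) (l : ℕ) :
    ((l : ℝ) + 1) * ((l : ℝ) + 1 + lam) * L (P lam (l + 1) * P lam (l + 1)) =
      ((l : ℝ) + lam) * ((l : ℝ) + 2 * lam) * L (P lam l * P lam l) := by
  -- first relation
  have e1 : ((l : ℝ) + 1) * L (P lam (l + 1) * P lam (l + 1)) =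
      2 * ((l : ℝ) + lam) * L (X * P lam l * P lam (l + 1)) := by
    rcases l with _ | l
    · have : P lam (0 + 1) * P lam (0 + 1) = (2 * lam) • (X * P lam 0 * P lam (0 + 1)) := by
        simp only [P, smul_eq_C_mul]
        ring
      rw [this, map_smul, smul_eq_mul]
      simp
    · have hr := P_rec lam l
      have h0 := h.orth hn lam hlam (l := l) (m := l + 2) (by omega)
      have : ((l : ℝ) + 2) • (P lam (l + 2) * P lam (l + 2)) =
        (2 * ((l : ℝ) + 1 + lam)) • (X * P lam (l + 1) * P lam (l + 2)) -
        ((l : ℝ) + 2 * lam) • (P lam l * P lam (l + 2)) := by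
        simp only [smul_eq_C_mul]
        linear_combination P lam (l + 2) * hr
      have := congrArg L this
      simp only [map_sub, map_smul, smul_eq_mul, h0] at this
      push_cast
      linarith
  have e2 : 2 * ((l : ℝ) + 1 + lam) * L (X * P lam l * P lam (l + 1)) =
      ((l : ℝ) + 2 * lam) * L (P lam l * P lam l) := by
    have hr := P_rec lam l
    have h0 := h.orth hn lam hlam (l := l) (m := l + 2) (by omega)
    have : ((l : ℝ) + 2) • (P lam l * P lam (l + 2)) =
        (2 * ((l : ℝ) + 1 + lam)) • (X * P lam l * P lam (l + 1)) -
        ((l : ℝ) + 2 * lam) • (P lam l * P lam l) := by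
      simp only [smul_eq_C_mul]
      linear_combination P lam l * hr
    have := congrArg L this
    simp only [map_sub, map_smul, smul_eq_mul, h0] at this
    linarith
  linear_combination ((l : ℝ) + 1 + lam) * e1 + ((l : ℝ) + lam) * e2

open Polynomial in
lemma IsGeg.weight {n : ℕ} {L : ℝ[X] →ₗ[ℝ] ℝ} (h : IsGeg n L) (hn : 2 ≤ n) (lam : ℝ)
    (hlam : lam = ((n : ℝ) - 1) / 2) (l : ℕ) :
    (((l : ℝ) + lam) / lam) ^ 2 * L (P lam l * P lam l) =
      (2 * (l : ℝ) + n - 1) / (n - 1) * ((n + l - 2).factorial : ℝ) /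
        ((n - 2).factorial * l.factorial) * L 1 := by
  have hn2 : (2 : ℝ) ≤ n := by exact_mod_cast hn
  have hl0 : (0 : ℝ) < lam := by rw [hlam]; linarith
  have hN : (n : ℝ) = 2 * lam + 1 := by rw [hlam]; ring
  induction l with
  | zero =>
    have : (n : ℝ) - 1 ≠ 0 := by linarith
    have := Nat.factorial_pos (n - 2)
    simp only [P, mul_one, Nat.cast_zero, zero_add, mul_zero, add_zero, Nat.factorial_zero,
      Nat.cast_one]
    field_simp
  | succ l ih =>
    have hs := h.norm hn lam hlam l
    have hf : ((n + (l + 1) - 2).factorial : ℝ) = ((l : ℝ) + 2 * lam) * (n + l - 2).factorial := by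
      have : n + (l + 1) - 2 = (n + l - 2) + 1 := by omega
      rw [this, Nat.factorial_succ]
      push_cast [show 2 ≤ n + l by omega]
      rw [hN]; ring
    rw [hf, Nat.factorial_succ]
    have hpos : (0 : ℝ) < (n - 2).factorial := by exact_mod_cast Nat.factorial_pos _
    have hpos2 : (0 : ℝ) < l.factorial := by exact_mod_cast Nat.factorial_pos _
    have e : L (P lam (l + 1) * P lam (l + 1)) = ((l : ℝ) + lam) * ((l : ℝ) + 2 * lam) /
        (((l : ℝ) + 1) * ((l : ℝ) + 1 + lam)) * L (P lam l * P lam l) := by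
      field_simp
      linear_combination hs
    have e0 : L (P lam l * P lam l) = (2 * (l : ℝ) + n - 1) / (n - 1) *
        ((n + l - 2).factorial : ℝ) /
        ((n - 2).factorial * l.factorial) * L 1 * (lam / (l + lam)) ^ 2 := by
      rw [← ih]; field_simp
    rw [e, e0, hN]
    push_cast
    have : 2 * lam + 1 - 1 = 2 * lam := by ring
    rw [this]
    have : 2 * (l : ℝ) + (2 * lam + 1) - 1 = 2 * (l + lam) := by ring
    rw [this]
    field_simp
    ring

open Polynomial in
lemma IsGeg.sumsq {n : ℕ} {L : ℝ[X] →ₗ[ℝ] ℝ} (h : IsGeg n L) (hn : 2 ≤ n) (lam : ℝ)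
    (hlam : lam = ((n : ℝ) - 1) / 2) (K : ℕ) :
    L ((∑ l ∈ Finset.range (K + 1), C (((l : ℝ) + lam) / lam) * P lam l) ^ 2) =
      ((n : ℝ) + 2 * K) * (n + K - 1).factorial / (n.factorial * K.factorial) * L 1 := by
  have h1 : L ((∑ l ∈ Finset.range (K + 1), C (((l : ℝ) + lam) / lam) * P lam l) ^ 2) =
      ∑ l ∈ Finset.range (K + 1), (((l : ℝ) + lam) / lam) ^ 2 * L (P lam l * P lam l) := by
    rw [sq, Finset.sum_mul_sum, map_sum]
    refine Finset.sum_congr rfl fun l hl => ?_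
    rw [map_sum, Finset.sum_eq_single l]
    · rw [← smul_eq_mul (b := L _), ← map_smul, smul_eq_C_mul]
      congr 1
      rw [C_pow]; ring
    · intro m _ hm
      have : C (((l : ℝ) + lam) / lam) * P lam l * (C (((m : ℝ) + lam) / lam) * P lam m) =
        ((((l : ℝ) + lam) / lam) * (((m : ℝ) + lam) / lam)) • (P lam l * P lam m) := by
        rw [smul_eq_C_mul, C_mul]; ring
      rw [this, map_smul, h.orth hn lam hlam hm.symm, smul_zero]
    · intro h'; exact absurd hl h'
  rw [h1]
  clear h1
  obtain ⟨d, rfl⟩ : ∃ d, n = d + 2 := ⟨n - 2, by omega⟩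
  have hd : (0 : ℝ) < d.factorial := by exact_mod_cast Nat.factorial_pos _
  induction K with
  | zero =>
    rw [Finset.sum_range_one, h.weight hn lam hlam]
    have a1 : d + 2 + 0 - 1 = d + 1 := by omega
    have a2 : d + 2 + 0 - 2 = d := by omega
    have a3 : d + 2 - 2 = d := by omega
    rw [a1, a2]
    try rw [a3]
    simp only [Nat.factorial_succ]
    push_cast
    have : (d : ℝ) + 2 - 1 = d + 1 := by ring
    rw [mul_zero, zero_add, add_zero, this, Nat.factorial_zero, Nat.cast_one]
    field_simp
    try ring
  | succ K ih =>
    rw [Finset.sum_range_succ, ih, h.weight hn lam hlam]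
    have a1 : d + 2 + K - 1 = (d + K) + 1 := by omega
    have a2 : d + 2 + (K + 1) - 2 = (d + K) + 1 := by omega
    have a3 : d + 2 - 2 = d := by omega
    have a4 : d + 2 + (K + 1) - 1 = (d + K) + 1 + 1 := by omega
    rw [a1, a2, a3, a4]
    simp only [Nat.factorial_succ]
    have hK : (0 : ℝ) < K.factorial := by exact_mod_cast Nat.factorial_pos _
    push_cast
    have : (d : ℝ) + 2 - 1 = d + 1 := by ring
    rw [this]
    field_simp
    ring

/-- The zonal integration functional on polynomials. -/
noncomputable def L (n : ℕ) (x : sphere (0 : EuclideanSpace ℝ (Fin (n + 1))) 1) :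
    Polynomial ℝ →ₗ[ℝ] ℝ where
  toFun p := ∫ y : sphere (0 : EuclideanSpace ℝ (Fin (n + 1))) 1,
    p.eval ⟪(x : EuclideanSpace ℝ (Fin (n + 1))), (y : EuclideanSpace ℝ (Fin (n + 1)))⟫
    ∂((volume : Measure (EuclideanSpace ℝ (Fin (n + 1)))).toSphere)
  map_add' p q := by
    have hi : ∀ p : Polynomial ℝ, Integrable
        (fun y : sphere (0 : EuclideanSpace ℝ (Fin (n + 1))) 1 =>
          p.eval ⟪(x : EuclideanSpace ℝ (Fin (n + 1))), (y : EuclideanSpace ℝ (Fin (n + 1)))⟫)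
        ((volume : Measure (EuclideanSpace ℝ (Fin (n + 1)))).toSphere) := by
      intro p
      have hc : Continuous (fun y : sphere (0 : EuclideanSpace ℝ (Fin (n + 1))) 1 =>
          p.eval ⟪(x : EuclideanSpace ℝ (Fin (n + 1))),
            (y : EuclideanSpace ℝ (Fin (n + 1)))⟫) := by
        fun_prop
      exact hc.integrable_of_hasCompactSupport (HasCompactSupport.of_compactSpace _)
    simp only [Polynomial.eval_add]
    exact integral_add (hi p) (hi q)
  map_smul' a p := by
    simp [Polynomial.eval_smul, integral_const_mul]

lemma L_pow (n : ℕ) (x : sphere (0 : EuclideanSpace ℝ (Fin (n + 1))) 1) (k : ℕ) :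
    L n x (Polynomial.X ^ k) = M n x k := by
  simp [L, M]

lemma L_isGeg (n : ℕ) (x : sphere (0 : EuclideanSpace ℝ (Fin (n + 1))) 1) :
    IsGeg n (L n x) where
  one := by
    have := L_pow n x 1
    rwa [pow_one, M_one] at this
  succ k := by rw [L_pow, L_pow, M_succ]

end ScalingAux

open ScalingAux
/-- The squared `L²`-norm of the weighted scaling function `φ_j(⟨x,·⟩)` equals
`(n+2^j−2)(n+2^{j−1}−2)!/(2^{nj} n! (2^{j−1}−1)!)`; the surface measure `σ` on `S^n` has
total mass `Σ_n = 2π^{λ+1}/Γ(λ+1)` with `λ = (n−1)/2`. -/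
theorem scalingFn_norm_sq (n j : ℕ) (hn : 2 ≤ n) (hj : 1 ≤ j)
    (x : sphere (0 : EuclideanSpace ℝ (Fin (n + 1))) 1) :
    (1 / (2 * π ^ (((n : ℝ) - 1) / 2 + 1) / Real.Gamma (((n : ℝ) - 1) / 2 + 1))) *
        ∫ y : sphere (0 : EuclideanSpace ℝ (Fin (n + 1))) 1,
          (scalingFn n j ⟪(x : EuclideanSpace ℝ (Fin (n + 1))),
              (y : EuclideanSpace ℝ (Fin (n + 1)))⟫) ^ 2
          ∂((volume : Measure (EuclideanSpace ℝ (Fin (n + 1)))).toSphere) =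
      (((n + 2 ^ j - 2) * Nat.factorial (n + 2 ^ (j - 1) - 2) : ℕ) : ℝ) /
        ((2 : ℝ) ^ (n * j) * (Nat.factorial n : ℝ) *
          (Nat.factorial (2 ^ (j - 1) - 1) : ℝ)) := by
  have hM := M_zero n x
  have hL1 : L n x 1 = M n x 0 := by simpa using L_pow n x 0
  have hpos : 0 < M n x 0 := by
    have hG : 0 < Real.Gamma (((n : ℝ) - 1) / 2 + 1) := by
      apply Real.Gamma_pos_of_pos
      have : (2 : ℝ) ≤ n := by exact_mod_cast hn
      linarith
    rw [hM]
    positivity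
  obtain ⟨i, rfl⟩ : ∃ i, j = i + 1 := ⟨j - 1, by omega⟩
  obtain ⟨K, hK⟩ : ∃ K, 2 ^ i = K + 1 := ⟨2 ^ i - 1, by have := Nat.one_le_two_pow (n := i); omega⟩
  have hs := (L_isGeg n x).sumsq hn _ rfl K
  have hint : ∫ y : sphere (0 : EuclideanSpace ℝ (Fin (n + 1))) 1,
          (scalingFn n (i + 1) ⟪(x : EuclideanSpace ℝ (Fin (n + 1))),
              (y : EuclideanSpace ℝ (Fin (n + 1)))⟫) ^ 2
          ∂((volume : Measure (EuclideanSpace ℝ (Fin (n + 1)))).toSphere) =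
      ((2 : ℝ) ^ (n * (i + 1)))⁻¹ * (((n : ℝ) + 2 * K) * (n + K - 1).factorial /
        (n.factorial * K.factorial) * L n x 1) := by
    rw [← hs]
    simp only [L, LinearMap.coe_mk, AddHom.coe_mk]
    rw [← integral_const_mul]
    refine integral_congr_ae (Filter.Eventually.of_forall fun y => ?_)
    simp only [scalingFn, Nat.add_sub_cancel, hK, Polynomial.eval_pow, Polynomial.eval_finsetSum,
      Polynomial.eval_mul, Polynomial.eval_C, P_eval, mul_pow]
    congr 1
    rw [← Real.rpow_natCast, ← Real.rpow_mul (by norm_num), ← Real.rpow_natCast,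
      ← Real.rpow_neg (by norm_num)]
    congr 1
    push_cast
    ring
  rw [hint, ← hM, hL1]
  have e1 : n + 2 ^ (i + 1) - 2 = n + 2 * K := by rw [pow_succ, hK]; omega
  have e2 : n + 2 ^ (i + 1 - 1) - 2 = n + K - 1 := by rw [Nat.add_sub_cancel, hK]; omega
  have e3 : 2 ^ (i + 1 - 1) - 1 = K := by rw [Nat.add_sub_cancel, hK]; omega
  rw [e1, e2, e3]
  push_cast
  field_simp
end

section
/- Let n ≥ 2, λ = (n−1)/2, j ≥ 1, and let φ_j(t) = 2^{−nj/2} Σ_{l=0}^{2^{j−1}−1} ((l+λ)/λ) C_l^λ(t). Then for every L ≤ 2^{j−1} and every sequence of pairwise distinct points x_1, …, x_L ∈ S^n, the L×L real matrix A with entries A_{ik} = φ_j(⟨x_i, x_k⟩) is positive definite, i.e., Σ_{i,k} c_i c_k φ_j(⟨x_i,x_k⟩) > 0 for all real c_1,…,c_L not all zero. -/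
open Real Finset MeasureTheory Metric
open scoped RealInnerProductSpace

namespace GegAux

open MvPolynomial

variable {d : ℕ}

/-- weight of a monomial for the Fischer product -/
noncomputable def wt (m : Fin d →₀ ℕ) : ℝ := ∏ i, ((m i).factorial : ℝ)

lemma wt_pos (m : Fin d →₀ ℕ) : 0 < wt m :=
  Finset.prod_pos fun i _ => by exact_mod_cast Nat.factorial_pos _

lemma wt_add (m : Fin d →₀ ℕ) (i : Fin d) :
    wt (m + Finsupp.single i 1) = ((m i : ℝ) + 1) * wt m := by
  unfold wt
  rw [← Finset.mul_prod_erase _ _ (Finset.mem_univ i),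
    ← Finset.mul_prod_erase _ (fun k => ((m k).factorial : ℝ)) (Finset.mem_univ i)]
  have : ∏ k ∈ Finset.univ.erase i, (((m + Finsupp.single i 1 : Fin d →₀ ℕ) k).factorial : ℝ)
      = ∏ k ∈ Finset.univ.erase i, ((m k).factorial : ℝ) := by
    apply Finset.prod_congr rfl
    intro k hk
    have hk' : i ≠ k := fun h => (Finset.ne_of_mem_erase hk) h.symm
    simp [Finsupp.single_apply, hk']
  rw [this]
  simp [Nat.factorial_succ]
  ring

lemma coeff_pd (i : Fin d) (m : Fin d →₀ ℕ) (q : MvPolynomial (Fin d) ℝ) :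
    coeff m (pderiv i q) = ((m i : ℝ) + 1) * coeff (m + Finsupp.single i 1) q := by
  induction q using MvPolynomial.induction_on' with
  | add p q hp hq => simp only [map_add, coeff_add, hp, hq]; ring
  | monomial u a =>
    rw [pderiv_monomial, coeff_monomial, coeff_monomial]
    by_cases hu : u i = 0
    · have : u ≠ m + Finsupp.single i 1 := by
        intro h
        have := congrArg (fun f => f i) h
        simp [hu] at this
      simp [hu, this]
    · by_cases h : u = m + Finsupp.single i 1
      · subst h
        simp
        ring
      · have : u - Finsupp.single i 1 ≠ m := by
          intro h2
          apply h
          rw [← h2]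
          exact (Finsupp.sub_add_single_one_cancel hu).symm
        simp [h, this]

/-- Fischer product -/
noncomputable def F (p q : MvPolynomial (Fin d) ℝ) : ℝ :=
  (basisMonomials (Fin d) ℝ).constr ℝ (fun m => wt m * coeff m q) p

lemma F_add_left (p p' q : MvPolynomial (Fin d) ℝ) : F (p + p') q = F p q + F p' q := by
  unfold F
  rw [map_add]

lemma F_C_left (p q : MvPolynomial (Fin d) ℝ) (a : ℝ) : F (C a * p) q = a * F p q := by
  unfold F
  rw [C_mul', map_smul, smul_eq_mul]

lemma F_monomial (m : Fin d →₀ ℕ) (a : ℝ) (q : MvPolynomial (Fin d) ℝ) :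
    F (monomial m a) q = a * (wt m * coeff m q) := by
  have h : (monomial m a : MvPolynomial (Fin d) ℝ) = C a * basisMonomials (Fin d) ℝ m := by
    rw [coe_basisMonomials, C_mul_monomial, mul_one]
  rw [h, F_C_left, F, Module.Basis.constr_basis]

lemma F_zero_left (q : MvPolynomial (Fin d) ℝ) : F 0 q = 0 := by
  unfold F
  rw [map_zero]

lemma F_add_right (p q q' : MvPolynomial (Fin d) ℝ) : F p (q + q') = F p q + F p q' := by
  induction p using MvPolynomial.induction_on' with
  | add p q hp hq => rw [F_add_left, F_add_left, F_add_left, hp, hq]; ring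
  | monomial u b => rw [F_monomial, F_monomial, F_monomial, coeff_add]; ring

lemma F_C_right (p q : MvPolynomial (Fin d) ℝ) (a : ℝ) : F p (C a * q) = a * F p q := by
  induction p using MvPolynomial.induction_on' with
  | add p q hp hq => rw [F_add_left, F_add_left, hp, hq]; ring
  | monomial u b => rw [F_monomial, F_monomial, coeff_C_mul]; ring

lemma F_zero_right (p : MvPolynomial (Fin d) ℝ) : F p 0 = 0 := by
  have := F_C_right p 0 0
  simpa using this

lemma F_sum_left {ι : Type*} (s : Finset ι) (p : ι → MvPolynomial (Fin d) ℝ)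
    (q : MvPolynomial (Fin d) ℝ) : F (∑ i ∈ s, p i) q = ∑ i ∈ s, F (p i) q := by
  classical
  induction s using Finset.induction_on with
  | empty => simp [F_zero_left]
  | insert a s ha ih => rw [Finset.sum_insert ha, Finset.sum_insert ha, F_add_left, ih]

lemma F_sum_right {ι : Type*} (s : Finset ι) (p : ι → MvPolynomial (Fin d) ℝ)
    (q : MvPolynomial (Fin d) ℝ) : F q (∑ i ∈ s, p i) = ∑ i ∈ s, F q (p i) := by
  classical
  induction s using Finset.induction_on with
  | empty => simp [F_zero_right]
  | insert a s ha ih => rw [Finset.sum_insert ha, Finset.sum_insert ha, F_add_right, ih]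

lemma F_self (p : MvPolynomial (Fin d) ℝ) :
    F p p = ∑ m ∈ p.support, wt m * (coeff m p) ^ 2 := by
  conv_lhs => rw [p.as_sum]
  rw [F_sum_left, ← p.as_sum]
  apply Finset.sum_congr rfl
  intro m _
  rw [F_monomial]
  ring

lemma F_self_nonneg (p : MvPolynomial (Fin d) ℝ) : 0 ≤ F p p := by
  rw [F_self]
  exact Finset.sum_nonneg fun m _ => mul_nonneg (wt_pos m).le (sq_nonneg _)

lemma F_self_eq_zero (p : MvPolynomial (Fin d) ℝ) (h : F p p = 0) : p = 0 := by
  rw [F_self, Finset.sum_eq_zero_iff_of_nonneg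
    (fun m _ => mul_nonneg (wt_pos m).le (sq_nonneg _))] at h
  by_contra hp
  obtain ⟨m, hm⟩ := MvPolynomial.support_nonempty.mpr hp
  have h1 := h m hm
  have h2 := mem_support_iff.mp hm
  have h3 := (wt_pos m).ne'
  simp_all

lemma F_X (i : Fin d) (p q : MvPolynomial (Fin d) ℝ) : F (X i * p) q = F p (pderiv i q) := by
  induction p using MvPolynomial.induction_on' with
  | add p q hp hq => rw [mul_add, F_add_left, F_add_left, hp, hq]
  | monomial u b =>
    rw [mul_comm, X, monomial_mul, F_monomial, F_monomial, coeff_pd, wt_add]; ring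

/-- linear form -/
noncomputable def S (y : Fin d → ℝ) : MvPolynomial (Fin d) ℝ := ∑ i, C (y i) * X i
/-- squared radius -/
noncomputable def R : MvPolynomial (Fin d) ℝ := ∑ i, X i * X i
/-- directional derivative -/
noncomputable def D (y : Fin d → ℝ) (p : MvPolynomial (Fin d) ℝ) : MvPolynomial (Fin d) ℝ :=
  ∑ i, C (y i) * pderiv i p
/-- Laplacian -/
noncomputable def Lap (p : MvPolynomial (Fin d) ℝ) : MvPolynomial (Fin d) ℝ :=
  ∑ i, pderiv i (pderiv i p)

lemma F_S (y : Fin d → ℝ) (p q : MvPolynomial (Fin d) ℝ) : F (S y * p) q = F p (D y q) := by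
  unfold S D
  rw [Finset.sum_mul, F_sum_left, F_sum_right]
  apply Finset.sum_congr rfl
  intro i _
  rw [mul_assoc, F_C_left, F_X, F_C_right]

lemma F_R (p q : MvPolynomial (Fin d) ℝ) : F (R * p) q = F p (Lap q) := by
  unfold R Lap
  rw [Finset.sum_mul, F_sum_left, F_sum_right]
  apply Finset.sum_congr rfl
  intro i _
  rw [mul_assoc, F_X, F_X]

lemma pd_S (i : Fin d) (y : Fin d → ℝ) : pderiv i (S y) = C (y i) := by
  unfold S
  simp [pderiv_mul, pderiv_X, Pi.single_apply]

lemma pd_R (i : Fin d) : pderiv i (R : MvPolynomial (Fin d) ℝ) = 2 * X i := by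
  unfold R
  simp [pderiv_mul, pderiv_X, Pi.single_apply, Finset.sum_add_distrib]
  ring

lemma D_mul (y : Fin d → ℝ) (p q : MvPolynomial (Fin d) ℝ) :
    D y (p * q) = D y p * q + p * D y q := by
  unfold D
  rw [Finset.sum_mul, Finset.mul_sum, ← Finset.sum_add_distrib]
  apply Finset.sum_congr rfl
  intro i _
  rw [pderiv_mul]; ring

lemma D_sub (y : Fin d → ℝ) (p q : MvPolynomial (Fin d) ℝ) :
    D y (p - q) = D y p - D y q := by
  unfold D
  rw [← Finset.sum_sub_distrib]
  apply Finset.sum_congr rfl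
  intro i _
  rw [map_sub]; ring

lemma D_C_mul (y : Fin d → ℝ) (a : ℝ) (p : MvPolynomial (Fin d) ℝ) :
    D y (C a * p) = C a * D y p := by
  rw [D_mul]
  simp [D]

lemma D_S (y : Fin d → ℝ) (hy : ∑ i, y i * y i = 1) : D y (S y) = 1 := by
  unfold D
  simp only [pd_S, ← map_mul, ← map_sum, hy, map_one]

lemma D_R (y : Fin d → ℝ) : D y R = 2 * S y := by
  unfold D S
  rw [Finset.mul_sum]
  apply Finset.sum_congr rfl
  intro i _
  rw [pd_R]; ring

lemma Lap_sub (p q : MvPolynomial (Fin d) ℝ) : Lap (p - q) = Lap p - Lap q := by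
  unfold Lap
  simp [Finset.sum_sub_distrib]

lemma Lap_C_mul (a : ℝ) (p : MvPolynomial (Fin d) ℝ) : Lap (C a * p) = C a * Lap p := by
  unfold Lap
  simp [Finset.mul_sum, pderiv_mul]

lemma Lap_S_mul (y : Fin d → ℝ) (p : MvPolynomial (Fin d) ℝ) :
    Lap (S y * p) = S y * Lap p + 2 * D y p := by
  unfold Lap D
  rw [Finset.mul_sum, Finset.mul_sum, ← Finset.sum_add_distrib]
  apply Finset.sum_congr rfl
  intro i _
  simp only [pderiv_mul, pd_S, map_add, pderiv_C]; ring

lemma Lap_R_mul {l : ℕ} (p : MvPolynomial (Fin d) ℝ) (hp : p.IsHomogeneous l) :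
    Lap (R * p) = R * Lap p + C (2 * d + 4 * l : ℝ) * p := by
  have hE := hp.sum_X_mul_pderiv
  have h2 : ∀ i : Fin d, pderiv i (2 : MvPolynomial (Fin d) ℝ) = 0 := fun i => by
    rw [show (2 : MvPolynomial (Fin d) ℝ) = C 2 from (map_ofNat C 2).symm]
    exact pderiv_C
  have : Lap (R * p) = R * Lap p + 2 * (d : MvPolynomial (Fin d) ℝ) * p + 4 * ∑ i, X i * pderiv i p := by
    unfold Lap
    have h1 : (2 * d * p : MvPolynomial (Fin d) ℝ) = ∑ i : Fin d, 2 * p := by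
      simp; ring
    rw [h1, Finset.mul_sum, Finset.mul_sum, ← Finset.sum_add_distrib, ← Finset.sum_add_distrib]
    apply Finset.sum_congr rfl
    intro i _
    simp only [pderiv_mul, pd_R, map_add, h2, pderiv_X_self]; ring
  rw [this, hE]
  simp only [map_add, map_mul, map_ofNat, map_natCast, nsmul_eq_mul]
  ring

lemma S_hom (y : Fin d → ℝ) : (S y).IsHomogeneous 1 := by
  unfold S
  apply IsHomogeneous.sum
  intro i _
  simpa using (isHomogeneous_C (Fin d) (y i)).mul (isHomogeneous_X ℝ i)

lemma R_hom : (R : MvPolynomial (Fin d) ℝ).IsHomogeneous 2 := by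
  unfold R
  apply IsHomogeneous.sum
  intro i _
  exact (isHomogeneous_X ℝ i).mul (isHomogeneous_X ℝ i)

lemma C_mul_hom {l : ℕ} (a : ℝ) {p : MvPolynomial (Fin d) ℝ} (hp : p.IsHomogeneous l) :
    (C a * p).IsHomogeneous l := by
  simpa using (isHomogeneous_C (Fin d) a).mul hp

lemma D_hom {l : ℕ} (y : Fin d → ℝ) {p : MvPolynomial (Fin d) ℝ} (hp : p.IsHomogeneous (l + 1)) :
    (D y p).IsHomogeneous l := by
  unfold D
  apply IsHomogeneous.sum
  intro i _
  exact C_mul_hom _ hp.pderiv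

/-- reproducing property -/
lemma F_S_pow (z : Fin d → ℝ) (l : ℕ) : ∀ q : MvPolynomial (Fin d) ℝ, q.IsHomogeneous l →
    F (S z ^ l) q = (l.factorial : ℝ) * eval z q := by
  induction l with
  | zero =>
    intro q hq
    have hq' : q = C (coeff 0 q) := by
      rw [← totalDegree_eq_zero_iff_eq_C]
      exact Nat.le_zero.mp hq.totalDegree_le
    rw [hq', pow_zero]
    have := F_monomial (0 : Fin d →₀ ℕ) 1 (C (coeff 0 q))
    rw [show (monomial (0 : Fin d →₀ ℕ) (1 : ℝ)) = 1 from rfl] at this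
    rw [this]
    simp [wt]
  | succ l ih =>
    intro q hq
    rw [pow_succ', F_S, ih _ (D_hom z hq)]
    have hE := congrArg (eval z) hq.sum_X_mul_pderiv
    have : eval z (D z q) = ((l : ℝ) + 1) * eval z q := by
      unfold D
      simpa using hE
    rw [this, Nat.factorial_succ]
    push_cast; ring

/-- solid zonal harmonics -/
noncomputable def Z (lam : ℝ) (y : Fin d → ℝ) : ℕ → MvPolynomial (Fin d) ℝ
  | 0 => 1
  | 1 => C (2 * lam) * S y
  | (l + 2) => C (2 * ((l : ℝ) + 1 + lam) / ((l : ℝ) + 2)) * (S y * Z lam y (l + 1))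
        - C (((l : ℝ) + 2 * lam) / ((l : ℝ) + 2)) * (R * Z lam y l)

lemma Z_two (lam : ℝ) (y : Fin d → ℝ) (l : ℕ) : Z lam y (l + 2) =
    C (2 * ((l : ℝ) + 1 + lam) / ((l : ℝ) + 2)) * (S y * Z lam y (l + 1))
        - C (((l : ℝ) + 2 * lam) / ((l : ℝ) + 2)) * (R * Z lam y l) := by
  rw [Z]

lemma Z_hom (lam : ℝ) (y : Fin d → ℝ) (l : ℕ) :
    (Z lam y l).IsHomogeneous l ∧ (Z lam y (l + 1)).IsHomogeneous (l + 1) := by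
  induction l with
  | zero =>
    refine ⟨?_, ?_⟩
    · rw [Z]; exact isHomogeneous_one _ _
    · rw [Z]; exact C_mul_hom _ (S_hom y)
  | succ l ih =>
    refine ⟨ih.2, ?_⟩
    rw [Z_two]
    apply IsHomogeneous.sub
    · apply C_mul_hom
      have := (S_hom y).mul ih.2
      rwa [show 1 + (l + 1) = l + 1 + 1 by ring] at this
    · apply C_mul_hom
      have := R_hom.mul ih.1
      rwa [show 2 + l = l + 1 + 1 by ring] at this

lemma Z_eval (lam : ℝ) (y z : Fin d → ℝ) (hz : ∑ i, z i * z i = 1) (l : ℕ) :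
    eval z (Z lam y l) = gegenbauer lam l (∑ i, y i * z i) ∧
    eval z (Z lam y (l + 1)) = gegenbauer lam (l + 1) (∑ i, y i * z i) := by
  have hS : eval z (S y) = ∑ i, y i * z i := by simp [S]
  have hR : eval z R = 1 := by simpa [R] using hz
  induction l with
  | zero => simp [Z, gegenbauer, hS]
  | succ l ih =>
    refine ⟨ih.2, ?_⟩
    rw [Z_two, gegenbauer]
    simp only [map_sub, map_mul, eval_C, hS, hR, ih.1, ih.2]
    field_simp

lemma Z_lead (lam : ℝ) (hl : 0 < lam) (y : Fin d → ℝ) (l : ℕ) :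
    (∃ a : ℝ, 0 < a ∧ ∀ y : Fin d → ℝ, ∃ g, Z lam y l = C a * S y ^ l + R * g) ∧
    (∃ a : ℝ, 0 < a ∧ ∀ y : Fin d → ℝ, ∃ g, Z lam y (l + 1) = C a * S y ^ (l + 1) + R * g) := by
  induction l with
  | zero =>
    refine ⟨⟨1, one_pos, fun y => ⟨0, by simp [Z]⟩⟩, ⟨2 * lam, by positivity, fun y => ⟨0, ?_⟩⟩⟩
    rw [Z]; ring
  | succ l ih =>
    refine ⟨ih.2, ?_⟩
    obtain ⟨a, ha, h⟩ := ih.2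
    refine ⟨2 * ((l : ℝ) + 1 + lam) / ((l : ℝ) + 2) * a, by positivity, fun y => ?_⟩
    obtain ⟨g, hg⟩ := h y
    refine ⟨C (2 * ((l : ℝ) + 1 + lam) / ((l : ℝ) + 2)) * (S y * g)
      - C (((l : ℝ) + 2 * lam) / ((l : ℝ) + 2)) * Z lam y l, ?_⟩
    rw [Z_two, hg, map_mul]
    ring

lemma Z_mul (lam : ℝ) (y : Fin d → ℝ) (l : ℕ) : C ((l : ℝ) + 2) * Z lam y (l + 2) =
    C (2 * ((l : ℝ) + 1 + lam)) * (S y * Z lam y (l + 1))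
        - C ((l : ℝ) + 2 * lam) * (R * Z lam y l) := by
  have h : ((l : ℝ) + 2) ≠ 0 := by positivity
  have e : ∀ (b : ℝ) (p : MvPolynomial (Fin d) ℝ),
      C ((l : ℝ) + 2) * (C (b / ((l : ℝ) + 2)) * p) = C b * p := by
    intro b p
    rw [← mul_assoc, ← map_mul, mul_div_cancel₀ _ h]
  rw [Z_two, mul_sub, e, e]

lemma C_cancel {a : ℝ} (ha : a ≠ 0) {p q : MvPolynomial (Fin d) ℝ} (h : C a * p = C a * q) :
    p = q := mul_left_cancel₀ (by simpa using ha) h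

lemma D_Z (lam : ℝ) (y : Fin d → ℝ) (hy : ∑ i, y i * y i = 1) (l : ℕ) :
    D y (Z lam y (l + 1)) = C ((l : ℝ) + 2 * lam) * Z lam y l ∧
    D y (Z lam y (l + 2)) = C ((l : ℝ) + 1 + 2 * lam) * Z lam y (l + 1) := by
  have h1 : D y (Z lam y 1) = C (2 * lam) := by
    rw [Z, D_C_mul, D_S y hy, mul_one]
  have step : ∀ l : ℕ, D y (Z lam y (l + 1)) = C ((l : ℝ) + 2 * lam) * Z lam y l →
      C ((l : ℝ) + 2 * lam) * (2 * (S y * Z lam y l) + R * D y (Z lam y l)) =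
        C ((l : ℝ) + 2 * lam) * (C (2 * ((l : ℝ) + 1 + lam)) * (S y * Z lam y l)
          - C ((l : ℝ) + 1) * Z lam y (l + 1)) →
      D y (Z lam y (l + 2)) = C ((l : ℝ) + 1 + 2 * lam) * Z lam y (l + 1) := by
    intro l ih h
    have h0 : ((l : ℝ) + 2) ≠ 0 := by positivity
    apply C_cancel h0
    rw [← D_C_mul, Z_mul, D_sub, D_C_mul, D_C_mul, D_mul, D_mul, D_S y hy, D_R, ih]
    have e : C ((l : ℝ) + 2 * lam) * (2 * S y * Z lam y l + R * D y (Z lam y l)) =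
      C ((l : ℝ) + 2 * lam) * (C (2 * ((l : ℝ) + 1 + lam)) * (S y * Z lam y l)
          - C ((l : ℝ) + 1) * Z lam y (l + 1)) := by rw [← h]; ring
    rw [e]
    simp only [map_add, map_mul, map_one, map_ofNat]
    ring
  induction l with
  | zero =>
    have a1 : D y (Z lam y (0 + 1)) = C (((0 : ℕ) : ℝ) + 2 * lam) * Z lam y 0 := by
      rw [zero_add, h1]
      simp [Z]
    refine ⟨a1, step 0 a1 ?_⟩
    have : D y (Z lam y 0) = 0 := by simp [Z, D]
    rw [this]
    simp only [Z, map_add, map_mul, map_one, map_ofNat, Nat.cast_zero, map_zero]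
    ring
  | succ l ih =>
    have a1 : D y (Z lam y (l + 1 + 1)) = C (((l + 1 : ℕ) : ℝ) + 2 * lam) * Z lam y (l + 1) := by
      rw [ih.2]; push_cast; rfl
    refine ⟨a1, ?_⟩
    have := step (l + 1) a1 ?_
    · exact this
    · congr 1
      rw [ih.1]
      have hm := Z_mul lam y l
      have e : C (((l + 1 : ℕ) : ℝ) + 1) * Z lam y (l + 1 + 1) =
          C ((l : ℝ) + 2) * Z lam y (l + 2) := by
        congr 2; push_cast; ring
      rw [e, hm]
      push_cast
      simp only [map_add, map_mul, map_one, map_ofNat]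
      ring

lemma Lap_Z (lam : ℝ) (hd : (d : ℝ) = 2 * lam + 2) (y : Fin d → ℝ)
    (hy : ∑ i, y i * y i = 1) (l : ℕ) :
    Lap (Z lam y l) = 0 ∧ Lap (Z lam y (l + 1)) = 0 := by
  induction l with
  | zero =>
    refine ⟨by simp [Z, Lap], ?_⟩
    rw [Z, Lap_C_mul]
    simp [Lap, pd_S]
  | succ l ih =>
    refine ⟨ih.2, ?_⟩
    have h0 : ((l : ℝ) + 2) ≠ 0 := by positivity
    apply C_cancel h0
    change C ((l : ℝ) + 2) * Lap (Z lam y (l + 2)) = _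
    rw [← Lap_C_mul, Z_mul, Lap_sub, Lap_C_mul, Lap_C_mul, Lap_S_mul,
      Lap_R_mul _ (Z_hom lam y l).1, ih.1, ih.2, (D_Z lam y hy l).1, hd]
    simp only [map_add, map_mul, map_one, map_ofNat]
    ring

/-- the key identity: the Fischer product of zonal harmonics is a positive multiple of the
Gegenbauer kernel -/
lemma key (lam : ℝ) (hl : 0 < lam) (hd : (d : ℝ) = 2 * lam + 2) (l : ℕ) :
    ∃ b : ℝ, 0 < b ∧ ∀ y z : Fin d → ℝ, ∑ i, y i * y i = 1 → ∑ i, z i * z i = 1 →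
      F (Z lam y l) (Z lam z l) = b * gegenbauer lam l (∑ i, y i * z i) := by
  obtain ⟨a, ha, h⟩ := (Z_lead (d := d) lam hl 0 l).1
  refine ⟨a * l.factorial, by positivity, fun y z hy hz => ?_⟩
  obtain ⟨g, hg⟩ := h y
  rw [hg, F_add_left, F_C_left, F_R, (Lap_Z lam hd z hz l).1, F_zero_right,
    F_S_pow _ _ _ (Z_hom lam z l).1, (Z_eval lam z y hy l).1]
  simp only [mul_comm]
  ring_nf

lemma quad (lam : ℝ) (hl : 0 < lam) (hd : (d : ℝ) = 2 * lam + 2) (l L : ℕ)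
    (x : Fin L → Fin d → ℝ) (hx : ∀ k, ∑ i, x k i * x k i = 1) (c : Fin L → ℝ) :
    0 ≤ ∑ i, ∑ k, c i * c k * gegenbauer lam l (∑ a, x i a * x k a) ∧
    (∑ i, ∑ k, c i * c k * gegenbauer lam l (∑ a, x i a * x k a) = 0 →
      ∑ i, C (c i) * Z lam (x i) l = 0) := by
  obtain ⟨b, hb, h⟩ := key lam hl hd l
  have e : F (∑ i, C (c i) * Z lam (x i) l) (∑ i, C (c i) * Z lam (x i) l) =
      b * ∑ i, ∑ k, c i * c k * gegenbauer lam l (∑ a, x i a * x k a) := by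
    rw [F_sum_left, Finset.mul_sum]
    apply Finset.sum_congr rfl
    intro i _
    rw [F_sum_right, Finset.mul_sum]
    apply Finset.sum_congr rfl
    intro k _
    rw [F_C_left, F_C_right, h _ _ (hx i) (hx k)]
    ring
  refine ⟨?_, fun h0 => F_self_eq_zero _ (by rw [e, h0, mul_zero])⟩
  have := F_self_nonneg (∑ i, C (c i) * Z lam (x i) l)
  rw [e] at this
  exact nonneg_of_mul_nonneg_right this hb

lemma pow_zero_of (lam : ℝ) (hl : 0 < lam) (N L : ℕ) (x : Fin L → Fin d → ℝ) (c : Fin L → ℝ)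
    (h : ∀ l < N, ∑ i, C (c i) * Z lam (x i) l = 0) (k : ℕ) :
    ∀ l, k + l < N → ∑ i, C (c i) * (S (x i) ^ k * Z lam (x i) l) = 0 := by
  induction k with
  | zero => intro l hlN; simpa using h l (by omega)
  | succ k ih =>
    intro l hlN
    cases l with
    | zero =>
      have h1 := ih 1 (by omega)
      have h0 : 2 * lam ≠ 0 := by positivity
      apply C_cancel h0
      rw [mul_zero, ← h1, Finset.mul_sum]
      apply Finset.sum_congr rfl
      intro i _
      simp only [Z]; ring
    | succ l =>
      have h1 := ih (l + 2) (by omega)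
      have h2 := ih l (by omega)
      have h0 : 2 * ((l : ℝ) + 1 + lam) ≠ 0 := by positivity
      apply C_cancel h0
      have : ∑ i, C (2 * ((l : ℝ) + 1 + lam)) * (C (c i) * (S (x i) ^ (k + 1) * Z lam (x i) (l + 1)))
        = C ((l : ℝ) + 2) * ∑ i, C (c i) * (S (x i) ^ k * Z lam (x i) (l + 2)) +
          C ((l : ℝ) + 2 * lam) * R * ∑ i, C (c i) * (S (x i) ^ k * Z lam (x i) l) := by
        rw [Finset.mul_sum, Finset.mul_sum, ← Finset.sum_add_distrib]
        apply Finset.sum_congr rfl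
        intro i _
        linear_combination (-(C (c i) * S (x i) ^ k)) * Z_mul lam (x i) l
      rw [Finset.mul_sum, this, h1, h2]
      simp

lemma S_inj : Function.Injective (S : (Fin d → ℝ) → MvPolynomial (Fin d) ℝ) := by
  intro y z h
  funext i
  have := congrArg (pderiv i) h
  rw [pd_S, pd_S] at this
  exact C_injective _ _ this

lemma main (lam : ℝ) (hl : 0 < lam) (hd : (d : ℝ) = 2 * lam + 2) (N L : ℕ) (hL : L ≤ N)
    (x : Fin L → Fin d → ℝ) (hx : ∀ k, ∑ i, x k i * x k i = 1) (hinj : Function.Injective x)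
    (c : Fin L → ℝ) (hc : c ≠ 0) :
    0 < ∑ l ∈ Finset.range N, (((l : ℝ) + lam) / lam) *
      ∑ i, ∑ k, c i * c k * gegenbauer lam l (∑ a, x i a * x k a) := by
  have hnn : ∀ l ∈ Finset.range N, 0 ≤ (((l : ℝ) + lam) / lam) *
      ∑ i, ∑ k, c i * c k * gegenbauer lam l (∑ a, x i a * x k a) := fun l _ =>
    mul_nonneg (by positivity) (quad lam hl hd l L x hx c).1
  refine lt_of_le_of_ne (Finset.sum_nonneg hnn) fun h0 => hc ?_
  rw [eq_comm, Finset.sum_eq_zero_iff_of_nonneg hnn] at h0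
  have hz : ∀ l < N, ∑ i, C (c i) * Z lam (x i) l = 0 := by
    intro l hlN
    apply (quad lam hl hd l L x hx c).2
    have hp : ((l : ℝ) + lam) / lam ≠ 0 := by positivity
    exact (mul_eq_zero.mp (h0 l (Finset.mem_range.mpr hlN))).resolve_left hp
  have hv := Matrix.eq_zero_of_forall_pow_sum_mul_pow_eq_zero
    (f := fun i => S (x i)) (v := fun i => (C (c i) : MvPolynomial (Fin d) ℝ))
    (S_inj.comp hinj) (fun i => by
      have := pow_zero_of lam hl N L x c hz i 0 (by omega)
      simpa [Z] using this)
  funext i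
  have := congrFun hv i
  simpa using this

end GegAux

/-- The weighted scaling function `φ_j` is strictly positive definite of cardinality
`2^{j−1}` on `S^n`: for at most `2^{j−1}` pairwise distinct points the Gramian matrix
is positive definite. -/
theorem scalingFn_strictly_positive_definite (n j : ℕ) (hn : 2 ≤ n) (hj : 1 ≤ j)
    (L : ℕ) (hL : L ≤ 2 ^ (j - 1))
    (x : Fin L → sphere (0 : EuclideanSpace ℝ (Fin (n + 1))) 1)
    (hx : Function.Injective x) (c : Fin L → ℝ) (hc : c ≠ 0) :
    0 < ∑ i : Fin L, ∑ k : Fin L,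
        c i * c k *
          scalingFn n j ⟪(x i : EuclideanSpace ℝ (Fin (n + 1))),
            (x k : EuclideanSpace ℝ (Fin (n + 1)))⟫ := by
  have hlam : (0 : ℝ) < ((n : ℝ) - 1) / 2 := by
    have : (2 : ℝ) ≤ n := by exact_mod_cast hn
    linarith
  have hin : ∀ u v : EuclideanSpace ℝ (Fin (n + 1)), ⟪u, v⟫ = ∑ a, u a * v a := by
    intro u v
    rw [PiLp.inner_apply]
    apply Finset.sum_congr rfl
    intro a _
    simp [mul_comm]
  have hm := GegAux.main (d := n + 1) (((n : ℝ) - 1) / 2) hlam (by push_cast; ring)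
    (2 ^ (j - 1)) L hL (fun i a => (x i : EuclideanSpace ℝ (Fin (n + 1))) a)
    (fun k => by
      have h1 : ‖(x k : EuclideanSpace ℝ (Fin (n + 1)))‖ = 1 := by simp
      rw [← hin, real_inner_self_eq_norm_sq, h1, one_pow])
    (fun i k h => hx (Subtype.ext (PiLp.ext fun a => congrFun h a))) c hc
  have hp : (0 : ℝ) < (2 : ℝ) ^ (-((n * j : ℕ) : ℝ) / 2) := by positivity
  have := mul_pos hp hm
  refine lt_of_lt_of_eq this ?_
  simp only [scalingFn, hin, Finset.mul_sum]
  rw [Finset.sum_comm (s := Finset.range _)]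
  apply Finset.sum_congr rfl
  intro i _
  rw [Finset.sum_comm (s := Finset.range _)]
  apply Finset.sum_congr rfl
  intro k _
  apply Finset.sum_congr rfl
  intro l _
  ring
end

section
/- Let n ≥ 2, λ = (n−1)/2, j ≥ 1, let φ_j(t) = 2^{−nj/2} Σ_{l=0}^{2^{j−1}−1} ((l+λ)/λ) C_l^λ(t), and fix x₀ ∈ S^n. Among all functions f on S^n that are restrictions to S^n of real polynomials on ℝ^{n+1} of total degree at most 2^{j−1}−1 and satisfy f(x₀) = 1, the minimal L²-norm ‖f‖ = ((1/Σ_n)∫_{S^n} |f(y)|² dσ(y))^{1/2} is attained by the normalized scaling function f = φ_j(⟨x₀,·⟩)/φ_j(1), and this minimal value equals ‖φ_j(⟨x₀,·⟩)‖ / φ_j(1). -/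
open Real Finset MeasureTheory Metric
open scoped RealInnerProductSpace

namespace SL
open Set

/-- One-dimensional Gaussian moments. -/
noncomputable def gam (k : ℕ) : ℝ := ∫ t : ℝ, t ^ k * Real.exp (-t ^ 2)

/-- Radial Gaussian moments. -/
noncomputable def rho (n k : ℕ) : ℝ := ∫ r in Ioi (0:ℝ), r ^ n * (r ^ k * Real.exp (-r ^ 2))

lemma half_moment (k : ℕ) : ∫ r in Ioi (0:ℝ), r ^ k * Real.exp (-r ^ 2) =
    (1/2) * Real.Gamma (((k:ℝ)+1)/2) := by
  have := integral_rpow_mul_exp_neg_rpow (p := 2) (q := k) (by norm_num)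
    (lt_of_lt_of_le (by norm_num) (Nat.cast_nonneg k))
  rw [← this]
  norm_cast

lemma half_rec (k : ℕ) : ∫ r in Ioi (0:ℝ), r ^ (k+2) * Real.exp (-r ^ 2) =
    (((k:ℝ)+1)/2) * ∫ r in Ioi (0:ℝ), r ^ k * Real.exp (-r ^ 2) := by
  rw [half_moment, half_moment]
  have : (((k+2:ℕ):ℝ)+1)/2 = ((k:ℝ)+1)/2 + 1 := by push_cast; ring
  rw [this, Real.Gamma_add_one (by positivity)]
  ring

lemma rho_eq (n k : ℕ) : rho n k = ∫ r in Ioi (0:ℝ), r ^ (n+k) * Real.exp (-r ^ 2) := by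
  simp only [rho, pow_add, mul_assoc]

lemma rho_rec (n k : ℕ) : rho n (k+2) = (((n:ℝ)+k+1)/2) * rho n k := by
  rw [rho_eq, rho_eq, ← add_assoc, half_rec]; push_cast; ring

lemma rho_pos (n k : ℕ) : 0 < rho n k := by
  rw [rho_eq, half_moment]
  have := Real.Gamma_pos_of_pos (s := (((n+k:ℕ):ℝ)+1)/2) (by positivity)
  positivity

lemma gam_odd (k : ℕ) (hk : Odd k) : gam k = 0 := by
  have h := integral_neg_eq_self (fun t : ℝ => t ^ k * Real.exp (-t ^ 2)) volume
  simp only [hk.neg_pow, neg_mul, neg_sq] at h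
  rw [integral_neg] at h
  simp only [gam]
  linarith

lemma gam_even (k : ℕ) (hk : Even k) : gam k = 2 * ∫ r in Ioi (0:ℝ), r ^ k * Real.exp (-r ^ 2) := by
  rw [← integral_comp_abs (f := fun r => r ^ k * Real.exp (-r ^ 2)), gam]
  simp [hk.pow_abs]

lemma gam_rec (k : ℕ) : gam (k+2) = (((k:ℝ)+1)/2) * gam k := by
  rcases Nat.even_or_odd k with h | h
  · rw [gam_even k h, gam_even (k+2) (h.add (by decide)), half_rec]; ring
  · rw [gam_odd k h, gam_odd (k+2) (h.add_even (by decide)), mul_zero]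

abbrev EE (n : ℕ) := EuclideanSpace ℝ (Fin (n+1))

noncomputable abbrev sg (n : ℕ) : Measure (sphere (0 : EE n) 1) := (volume : Measure (EE n)).toSphere

lemma gauss_full (n : ℕ) (b : OrthonormalBasis (Fin (n+1)) ℝ (EE n)) (α : Fin (n+1) → ℕ) :
    ∫ y : EE n, (∏ i, (b.repr y i) ^ α i) * Real.exp (-‖y‖ ^ 2) = ∏ i, gam (α i) := by
  have h1 := b.measurePreserving_repr.integral_comp' (f := b.measurableEquiv)
    (fun z : EE n => (∏ i, (z i) ^ α i) * Real.exp (-‖z‖ ^ 2))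
  have h2 : ∀ y, b.measurableEquiv y = b.repr y := fun y => rfl
  simp only [h2, LinearIsometryEquiv.norm_map] at h1
  rw [h1]
  have h3 := (EuclideanSpace.volume_preserving_symm_measurableEquiv_toLp (Fin (n+1))).integral_comp'
    (fun z : Fin (n+1) → ℝ => ∏ i, ((z i) ^ α i * Real.exp (-(z i)^2)))
  rw [integral_fintype_prod_volume_eq_prod (fun i (t:ℝ) => t ^ α i * Real.exp (-t^2))] at h3
  simp only [gam]
  rw [← h3]
  congr 1
  ext z
  rw [Finset.prod_mul_distrib, ← Real.exp_sum, EuclideanSpace.norm_sq_eq]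
  simp

lemma polar (n : ℕ) (F : EE n → ℝ) (k : ℕ) (hF : ∀ (r : ℝ) y, F (r • y) = r ^ k * F y) :
    ∫ y : EE n, F y * Real.exp (-‖y‖^2) = (∫ y, F (y : EE n) ∂(sg n)) * rho n k := by
  have hd : Module.finrank ℝ (EE n) - 1 = n := by simp
  calc
    _ = ∫ x : ({(0)}ᶜ : Set (EE n)), F x.1 * Real.exp (-‖x.1‖^2) ∂((volume : Measure (EE n)).comap (↑)) := by
      rw [integral_subtype_comap (measurableSet_singleton _).compl
        fun x : EE n ↦ F x * Real.exp (-‖x‖^2), restrict_compl_singleton]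
    _ = ∫ x : sphere (0 : EE n) 1 × Ioi (0:ℝ), F (x.1 : EE n) * ((x.2:ℝ)^k * Real.exp (-(x.2:ℝ)^2))
          ∂(sg n).prod (.volumeIoiPow (Module.finrank ℝ (EE n) - 1)) := by
      rw [← (volume : Measure (EE n)).measurePreserving_homeomorphUnitSphereProd.integral_comp
        (Homeomorph.measurableEmbedding _)]
      congr 1
      ext x
      have hx : ‖(x:EE n)‖ ≠ 0 := norm_ne_zero_iff.2 x.2
      simp only [homeomorphUnitSphereProd_apply_fst_coe, homeomorphUnitSphereProd_apply_snd_coe, hF]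
      rw [inv_pow]
      field_simp
    _ = (∫ y, F (y : EE n) ∂(sg n)) * ∫ x : Ioi (0:ℝ), ((x:ℝ)^k * Real.exp (-(x:ℝ)^2)) ∂(.volumeIoiPow n) := by
      rw [hd]
      exact integral_prod_mul (fun y : sphere (0 : EE n) 1 => F (y : EE n))
        (fun x : Ioi (0:ℝ) => ((x:ℝ)^k * Real.exp (-(x:ℝ)^2)))
    _ = _ := by
      congr 1
      simp only [Measure.volumeIoiPow, ENNReal.ofReal]
      rw [integral_withDensity_eq_integral_smul,
        integral_subtype_comap measurableSet_Ioi
          fun a ↦ Real.toNNReal (a ^ n) • (a^k * Real.exp (-a^2)),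
        setIntegral_congr_fun measurableSet_Ioi fun x hx ↦ ?_, rho]
      · rw [NNReal.smul_def, Real.coe_toNNReal _ (pow_nonneg (le_of_lt hx) _), smul_eq_mul]
      · exact (measurable_subtype_coe.pow_const _).real_toNNReal

lemma moment (n : ℕ) (b : OrthonormalBasis (Fin (n+1)) ℝ (EE n)) (α : Fin (n+1) → ℕ) :
    ∏ i, gam (α i) = (∫ y, (∏ i, (b.repr (y : EE n) i) ^ α i) ∂(sg n)) * rho n (∑ i, α i) := by
  rw [← gauss_full n b, polar n (fun y => ∏ i, (b.repr y i) ^ α i)]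
  intro r y
  simp [mul_pow, Finset.prod_mul_distrib, Finset.prod_pow_eq_pow_sum]

lemma integrable_sg {n : ℕ} {f : sphere (0 : EE n) 1 → ℝ} (hf : Continuous f) :
    Integrable f (sg n) := hf.integrable_of_hasCompactSupport (HasCompactSupport.of_compactSpace f)

end SL

namespace SL
open Polynomial

/-- Gegenbauer polynomials as elements of the polynomial ring. -/
noncomputable def gp (lam : ℝ) : ℕ → ℝ[X]
  | 0 => 1
  | 1 => C (2 * lam) * X
  | (l + 2) => C (1 / ((l : ℝ) + 2)) * (C (2 * ((l : ℝ) + 1 + lam)) * X * gp lam (l + 1)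
        - C ((l : ℝ) + 2 * lam) * gp lam l)

lemma gp_eval (lam t : ℝ) : ∀ l, (gp lam l).eval t = gegenbauer lam l t ∧
    (gp lam (l+1)).eval t = gegenbauer lam (l+1) t := by
  intro l
  induction l with
  | zero => simp [gp, gegenbauer]
  | succ l ih =>
    refine ⟨ih.2, ?_⟩
    simp only [gp, gegenbauer, eval_mul, eval_sub, eval_C, eval_X, ih.1, ih.2]
    ring

lemma gp_deg (lam : ℝ) : ∀ l, (gp lam l).natDegree ≤ l ∧ (gp lam (l+1)).natDegree ≤ l + 1 := by
  intro l
  induction l with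
  | zero =>
    constructor
    · simp [gp]
    · simp only [gp]; exact (natDegree_C_mul_le _ _).trans (by simp)
  | succ l ih =>
    refine ⟨ih.2, ?_⟩
    simp only [gp]
    refine (natDegree_C_mul_le _ _).trans ((natDegree_sub_le _ _).trans (max_le ?_ ?_))
    · rw [mul_assoc]
      refine (natDegree_C_mul_le _ _).trans (natDegree_mul_le.trans ?_)
      have := ih.2
      rw [natDegree_X]; omega
    · refine (natDegree_C_mul_le _ _).trans ?_
      have := ih.1
      omega

lemma C2 : C (2:ℝ) = 2 := rfl

lemma C3 : C (3:ℝ) = 3 := rfl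

lemma gp_rec (lam : ℝ) (l : ℕ) : ((l : ℝ[X]) + 2) * gp lam (l+2) =
    2 * ((l : ℝ[X]) + 1 + C lam) * X * gp lam (l+1) - ((l : ℝ[X]) + 2 * C lam) * gp lam l := by
  have h : ((l : ℝ[X]) + 2) = C ((l:ℝ) + 2) := by simp [C2]
  have h2 : C ((l:ℝ)+2) * C (1 / ((l:ℝ)+2)) = 1 := by
    rw [← C_mul, mul_one_div_cancel (by positivity), C_1]
  rw [gp, h, ← mul_assoc, h2, one_mul]
  simp [C2]

lemma cast_cancel (l : ℕ) {p q : ℝ[X]} (h : ((l : ℝ[X]) + 1) * p = ((l : ℝ[X]) + 1) * q) : p = q := by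
  refine mul_left_cancel₀ ?_ h
  have : ((l : ℝ[X]) + 1) = ((l + 1 : ℕ) : ℝ[X]) := by push_cast; rfl
  rw [this]; exact Nat.cast_ne_zero.2 (by omega)

lemma gp_deriv (lam : ℝ) (l : ℕ) :
    (derivative (gp lam (l+1)) = X * derivative (gp lam l) + ((l : ℝ[X]) + 2 * C lam) * gp lam l) ∧
    (X * derivative (gp lam (l+1)) - derivative (gp lam l) = ((l : ℝ[X]) + 1) * gp lam (l+1)) := by
  induction l with
  | zero => simp [gp, mul_comm, C2]
  | succ l ih =>
    obtain ⟨hB, hA⟩ := ih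
    have hr := gp_rec lam l
    have hd := congrArg derivative hr
    simp only [derivative_mul, derivative_sub, derivative_add, derivative_natCast, derivative_X,
      derivative_C, derivative_ofNat, derivative_one] at hd
    have hB' : derivative (gp lam (l+2)) = X * derivative (gp lam (l+1)) +
        (((l+1 : ℕ) : ℝ[X]) + 2 * C lam) * gp lam (l+1) := by
      apply cast_cancel (l+1)
      push_cast
      linear_combination hd + ((l : ℝ[X]) + 2 * C lam) * hA
    refine ⟨hB', ?_⟩
    change X * derivative (gp lam (l+2)) - _ = _ * gp lam (l+2)
    push_cast at hB' ⊢
    linear_combination X * hB' - hr + X * hA - hB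

lemma gp_D (lam : ℝ) (l : ℕ) : (1 - X^2) * derivative (gp lam (l+1)) =
    - ((l : ℝ[X]) + 1) * X * gp lam (l+1) + ((l : ℝ[X]) + 2 * C lam) * gp lam l := by
  obtain ⟨hB, hA⟩ := gp_deriv lam l
  linear_combination hB - X * hA

lemma gp_one_pos (lam : ℝ) (hl : 0 < lam) (l : ℕ) : 0 < (gp lam l).eval 1 := by
  induction l with
  | zero => simp [gp]
  | succ l ih =>
    have h := congrArg (eval 1) (gp_D lam l)
    simp only [eval_mul, eval_sub, eval_one, eval_pow, eval_X, eval_neg, eval_add, eval_natCast,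
      eval_ofNat, eval_C] at h
    have : ((l:ℝ)+1) * (gp lam (l+1)).eval 1 = ((l:ℝ) + 2 * lam) * (gp lam l).eval 1 := by linarith
    have h2 : 0 < ((l:ℝ)+1) * (gp lam (l+1)).eval 1 := by rw [this]; positivity
    exact (pos_iff_pos_of_mul_pos h2).1 (by positivity)

/-- The kernel. -/
noncomputable def K (lam : ℝ) (N : ℕ) : ℝ[X] :=
  ∑ l ∈ Finset.range N, C (((l:ℝ) + lam) / lam) * gp lam l

lemma CD (lam : ℝ) (hl : 0 < lam) (N : ℕ) : 2 * C lam * (X - 1) * K lam (N+1) =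
    ((N : ℝ[X]) + 1) * gp lam (N+1) - ((N : ℝ[X]) + 2 * C lam) * gp lam N := by
  have key (l : ℕ) : C lam * C (((l:ℝ) + lam) / lam) = (l : ℝ[X]) + C lam := by
    rw [← C_mul, mul_div_cancel₀ _ hl.ne']; simp
  induction N with
  | zero =>
    have := key 0
    simp only [K, Finset.sum_range_one, gp, zero_add, CharP.cast_eq_zero, C_mul] at this ⊢
    simp only [map_ofNat]
    linear_combination 2 * (X-1) * this
  | succ N ih =>
    rw [K, Finset.sum_range_succ, ← K]
    have hk := key (N+1)
    have hr := gp_rec lam N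
    push_cast at hk ⊢
    linear_combination ih + 2 * (X-1) * gp lam (N+1) * hk - hr

section func

lemma L_ibp (lam : ℝ) (L : ℝ[X] →ₗ[ℝ] ℝ) (h1 : L X = 0)
  (hL : ∀ m : ℕ, ((m:ℝ) + 2 * lam + 2) * L (X^(m+2)) = ((m:ℝ)+1) * L (X^m)) (g : ℝ[X]) : L ((1 - X^2) * derivative g) = (2 * lam + 1) * L (X * g) := by
  induction g using Polynomial.induction_on' with
  | add p q hp hq => simp only [derivative_add, mul_add, map_add, hp, hq]
  | monomial k a =>
    rw [← C_mul_X_pow_eq_monomial]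
    rcases k with _ | k
    · have : X * (C a * X ^ 0) = a • (X : ℝ[X]) := by rw [smul_eq_C_mul]; ring
      rw [this, map_smul, h1]; simp
    · have e1 : (1 - X^2) * derivative (C a * X^(k+1)) =
        (a * (k+1)) • (X^k : ℝ[X]) - (a * (k+1)) • (X^(k+2) : ℝ[X]) := by
        simp only [smul_eq_C_mul, derivative_C_mul_X_pow]
        simp
        ring
      have e2 : X * (C a * X^(k+1)) = a • (X^(k+2) : ℝ[X]) := by rw [smul_eq_C_mul]; ring
      rw [e1, e2, map_sub, map_smul, map_smul, map_smul, smul_eq_mul, smul_eq_mul, smul_eq_mul]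
      linear_combination -a * hL k

lemma L_gp (lam : ℝ) (hl : 0 < lam) (L : ℝ[X] →ₗ[ℝ] ℝ) (h1 : L X = 0)
  (hL : ∀ m : ℕ, ((m:ℝ) + 2 * lam + 2) * L (X^(m+2)) = ((m:ℝ)+1) * L (X^m)) (l : ℕ) : L (gp lam (l+1)) = 0 ∧ L (gp lam (l+2)) = 0 := by
  have st (l : ℕ) : ((l:ℝ)+2) * (l + 2 + 2 * lam) * L (gp lam (l+2)) = (l + 2 * lam) * l * L (gp lam l) := by
    have hr := gp_rec lam l
    have e : (l:ℝ[X]) = C (l:ℝ) := by simp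
    have e2 : (2:ℝ[X]) = C 2 := rfl
    have e3 : (1:ℝ[X]) = C 1 := by simp
    have hr' : ((l:ℝ)+2) • gp lam (l+2) = (2 * ((l:ℝ) + 1 + lam)) • (X * gp lam (l+1)) -
        ((l:ℝ) + 2 * lam) • gp lam l := by
      simp only [smul_eq_C_mul]
      simp only [map_add, map_mul, ← e, ← e2, ← e3]
      linear_combination hr
    have hd : (1 - X^2) * derivative (gp lam (l+1)) =
      (-((l:ℝ)+1)) • (X * gp lam (l+1)) + ((l:ℝ) + 2 * lam) • gp lam l := by
      rw [gp_D]
      simp only [smul_eq_C_mul]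
      simp only [map_add, map_mul, map_neg, ← e, ← e2, ← e3]
      ring
    have h2 := congrArg L hr'
    have h3 := congrArg L hd
    rw [L_ibp lam L h1 hL] at h3
    simp only [map_add, map_sub, map_smul, smul_eq_mul] at h2 h3
    linear_combination (l + 2 + 2 * lam) * h2 + 2 * ((l:ℝ) + 1 + lam) * h3
  have pos (l : ℕ) (h : (l + 2 * lam) * l * L (gp lam l) = 0) : L (gp lam (l+2)) = 0 := by
    have := st l
    rw [h] at this
    exact (mul_eq_zero.1 this).resolve_left (by positivity)
  induction l with
  | zero =>
    refine ⟨?_, pos 0 (by simp)⟩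
    simp only [gp, ← smul_eq_C_mul, map_smul, h1, smul_zero]
  | succ l ih => exact ⟨ih.2, pos (l+1) (by rw [ih.1]; simp)⟩

lemma L_orth (lam : ℝ) (hl : 0 < lam) (L : ℝ[X] →ₗ[ℝ] ℝ) (h1 : L X = 0)
  (hL : ∀ m : ℕ, ((m:ℝ) + 2 * lam + 2) * L (X^(m+2)) = ((m:ℝ)+1) * L (X^m)) (m l : ℕ) (h : m < l) : L (gp lam l * X^m) = 0 := by
  induction m generalizing l with
  | zero =>
    obtain ⟨l, rfl⟩ : ∃ k, l = k + 1 := ⟨l-1, by omega⟩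
    simpa using (L_gp lam hl L h1 hL l).1
  | succ m ih =>
    obtain ⟨l, rfl⟩ : ∃ k, l = k + 2 := ⟨l-2, by omega⟩
    have hr := gp_rec lam (l+1)
    have e : (l:ℝ[X]) = C (l:ℝ) := by simp
    have e2 : (2:ℝ[X]) = C 2 := rfl
    have e3 : (1:ℝ[X]) = C 1 := by simp
    have hr' : (2 * ((l:ℝ) + 2 + lam)) • (gp lam (l+2) * X^(m+1)) =
      ((l:ℝ)+3) • (gp lam (l+3) * X^m) + ((l:ℝ) + 1 + 2 * lam) • (gp lam (l+1) * X^m) := by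
      simp only [smul_eq_C_mul]
      have e4 : C (3:ℝ) = 3 := rfl
      simp only [map_add, map_mul, ← e, ← e2, ← e3, e4]
      push_cast at hr
      linear_combination -X^m * hr
    have h2 := congrArg L hr'
    simp only [map_add, map_smul, smul_eq_mul] at h2
    rw [ih (l+3) (by omega), ih (l+1) (by omega)] at h2
    simp only [mul_zero, add_zero] at h2
    exact (mul_eq_zero.1 h2).resolve_left (by positivity)

lemma L_repr (lam : ℝ) (hl : 0 < lam) (L : ℝ[X] →ₗ[ℝ] ℝ) (h1 : L X = 0)
  (hL : ∀ m : ℕ, ((m:ℝ) + 2 * lam + 2) * L (X^(m+2)) = ((m:ℝ)+1) * L (X^m)) (N m : ℕ) (h : m < N) : L (K lam N * X^m) = L (K lam N) := by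
  obtain ⟨N, rfl⟩ : ∃ k, N = k + 1 := ⟨N-1, by omega⟩
  induction m with
  | zero => simp
  | succ m ih =>
    rw [← ih (by omega)]
    have e : (N:ℝ[X]) = C (N:ℝ) := by simp
    have e2 : (2:ℝ[X]) = C 2 := rfl
    have e3 : (1:ℝ[X]) = C 1 := by simp
    have hr' : (2 * lam) • (K lam (N+1) * X^(m+1)) - (2 * lam) • (K lam (N+1) * X^m) =
      ((N:ℝ)+1) • (gp lam (N+1) * X^m) - ((N:ℝ) + 2 * lam) • (gp lam N * X^m) := by
      simp only [smul_eq_C_mul]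
      simp only [map_add, map_mul, ← e, ← e2, ← e3]
      linear_combination X^m * CD lam hl N
    have h2 := congrArg L hr'
    simp only [map_sub, map_smul, smul_eq_mul] at h2
    rw [L_orth lam hl L h1 hL m (N+1) (by omega), L_orth lam hl L h1 hL m N (by omega)] at h2
    have h3 : (2 * lam) * (L (K lam (N+1) * X^(m+1)) - L (K lam (N+1) * X^m)) = 0 := by linarith
    have := (mul_eq_zero.1 h3).resolve_left (by positivity)
    linarith
end func

end SL

namespace SL
open Polynomial

variable {n : ℕ} (b : OrthonormalBasis (Fin (n+1)) ℝ (EE n))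

/-- The functional integrating `q(y₀)` times a monomial in the other coordinates. -/
noncomputable def J (β : Fin n → ℕ) : ℝ[X] →ₗ[ℝ] ℝ where
  toFun q := ∫ y, q.eval (b.repr (y : EE n) 0) * ∏ i : Fin n, (b.repr (y : EE n) i.succ) ^ β i ∂(sg n)
  map_add' p q := by
    rw [← integral_add]
    · simp only [eval_add, add_mul]
    · apply integrable_sg; fun_prop
    · apply integrable_sg; fun_prop
  map_smul' c p := by
    simp only [eval_smul, smul_eq_mul, mul_assoc, RingHom.id_apply]
    rw [integral_const_mul]

lemma J_apply (β : Fin n → ℕ) (q : ℝ[X]) : J b β q =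
  ∫ y, q.eval (b.repr (y : EE n) 0) * ∏ i : Fin n, (b.repr (y : EE n) i.succ) ^ β i ∂(sg n) := rfl

lemma J_moment (β : Fin n → ℕ) (a : ℕ) :
    gam a * ∏ i, gam (β i) = J b β (X^a) * rho n (a + ∑ i, β i) := by
  have := moment n b (Fin.cons a β)
  simpa [Fin.prod_univ_succ, Fin.sum_univ_succ, J_apply] using this

lemma J_odd (β : Fin n → ℕ) (i : Fin n) (hi : Odd (β i)) (q : ℝ[X]) : J b β q = 0 := by
  induction q using Polynomial.induction_on' with
  | add p q hp hq => rw [map_add, hp, hq, add_zero]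
  | monomial k a =>
    rw [← C_mul_X_pow_eq_monomial, ← smul_eq_C_mul, map_smul]
    have h := J_moment b β k
    rw [Finset.prod_eq_zero (Finset.mem_univ i) (gam_odd _ hi), mul_zero] at h
    rw [(mul_eq_zero.1 h.symm).resolve_right (rho_pos _ _).ne', smul_zero]

lemma J_X (β : Fin n → ℕ) : J b β X = 0 := by
  have h := J_moment b β 1
  rw [gam_odd 1 (by decide), zero_mul, pow_one] at h
  exact (mul_eq_zero.1 h.symm).resolve_right (rho_pos _ _).ne'

lemma J_R0 (β : Fin n → ℕ) (a : ℕ) :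
    ((a:ℝ) + (∑ i, β i : ℕ) + n + 1) * J b β (X^(a+2)) = ((a:ℝ)+1) * J b β (X^a) := by
  have h1 := J_moment b β a
  have h2 := J_moment b β (a+2)
  rw [add_right_comm, rho_rec, gam_rec] at h2
  have h3 := rho_pos n (a + ∑ i, β i)
  push_cast at h2 ⊢
  apply mul_right_cancel₀ h3.ne'
  push_cast at *
  linear_combination -2 * h2 + ((a:ℝ)+1) * h1

lemma J_Ri (β : Fin n → ℕ) (j : Fin n) (a : ℕ) :
    ((a:ℝ) + (∑ i, β i : ℕ) + n + 1) * J b (Function.update β j (β j + 2)) (X^a) =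
      ((β j:ℝ)+1) * J b β (X^a) := by
  have h1 := J_moment b β a
  have h2 := J_moment b (Function.update β j (β j + 2)) a
  have hs : ∑ i, Function.update β j (β j + 2) i = ∑ i, β i + 2 := by
    rw [Finset.sum_update_of_mem (Finset.mem_univ j), ← Finset.add_sum_erase _ _ (Finset.mem_univ j),
      Finset.sdiff_singleton_eq_erase]
    ring
  have hp : ∏ i, gam (Function.update β j (β j + 2) i) = (((β j:ℝ)+1)/2) * ∏ i, gam (β i) := by
    rw [← Finset.mul_prod_erase _ _ (Finset.mem_univ j),
      ← Finset.mul_prod_erase _ (fun i => gam (β i)) (Finset.mem_univ j), Function.update_self, gam_rec,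
      mul_assoc]
    congr 2
    apply Finset.prod_congr rfl
    intro i hi
    rw [Function.update_of_ne (Finset.ne_of_mem_erase hi)]
  rw [hs, hp, ← add_assoc, rho_rec] at h2
  have h3 := rho_pos n (a + ∑ i, β i)
  apply mul_right_cancel₀ h3.ne'
  push_cast at *
  linear_combination -2 * h2 + ((β j:ℝ)+1) * h1

lemma J_red (β : Fin n → ℕ) (j : Fin n) (q : ℝ[X]) :
    (((∑ i, β i : ℕ) : ℝ) + n) * J b (Function.update β j (β j + 2)) q =
      ((β j:ℝ)+1) * J b β (q - q * X^2) := by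
  induction q using Polynomial.induction_on' with
  | add p q hp hq =>
    rw [map_add, mul_add, hp, hq, ← mul_add, ← map_add]
    congr 2; ring
  | monomial k a =>
    have e : (C a * X^k - C a * X^k * X^2 : ℝ[X]) = a • (X^k - X^(k+2)) := by
      rw [smul_eq_C_mul]; ring
    rw [← C_mul_X_pow_eq_monomial, e, ← smul_eq_C_mul, map_smul, map_smul, map_sub]
    have h0 := J_R0 b β k
    have hi := J_Ri b β j k
    simp only [smul_eq_mul]
    have hp : 0 < ((k:ℝ) + (∑ i, β i : ℕ) + n + 1) := by positivity
    apply mul_left_cancel₀ hp.ne'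
    linear_combination a * ((((∑ i, β i : ℕ) : ℝ) + n) * hi + ((β j:ℝ)+1) * h0)

lemma J_K (hn : 2 ≤ n) (N S : ℕ) : ∀ (β : Fin n → ℕ) (a : ℕ), ∑ i, β i = S → a + S < N →
    J b β (K (((n:ℝ)-1)/2) N * X^a) = if β = 0 then J b 0 (K (((n:ℝ)-1)/2) N) else 0 := by
  have hn' : (2:ℝ) ≤ n := by exact_mod_cast hn
  induction S using Nat.strong_induction_on with
  | _ S ih =>
  intro β a hβ ha
  by_cases h0 : β = 0
  · subst h0
    rw [if_pos rfl]
    apply L_repr _ (by linarith) _ (J_X b 0) _ _ _ (by omega)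
    intro m
    have := J_R0 b 0 m
    simp only [Pi.zero_apply, Finset.sum_const_zero, Nat.cast_zero] at this
    linear_combination this
  · rw [if_neg h0]
    obtain ⟨j, hj⟩ := Function.ne_iff.1 h0
    rcases Nat.even_or_odd (β j) with he | ho
    · have hj2 : 2 ≤ β j := by
        obtain ⟨c, hc⟩ := he
        simp only [Pi.zero_apply] at hj
        omega
      set γ := Function.update β j (β j - 2) with hγ
      have hβγ : β = Function.update γ j (γ j + 2) := by
        simp [hγ, Nat.sub_add_cancel hj2]
      have hs : ∑ i, γ i + 2 = S := by
        rw [← hβ, hγ, Finset.sum_update_of_mem (Finset.mem_univ j),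
          ← Finset.add_sum_erase _ β (Finset.mem_univ j), Finset.sdiff_singleton_eq_erase]
        omega
      have hr := J_red b γ j (K (((n:ℝ)-1)/2) N * X^a)
      rw [← hβγ, map_sub, mul_assoc, ← pow_add, ih (∑ i, γ i) (by omega) γ a rfl (by omega),
        ih (∑ i, γ i) (by omega) γ (a+2) rfl (by omega), sub_self, mul_zero] at hr
      exact (mul_eq_zero.1 hr).resolve_left (by positivity)
    · exact J_odd b β j ho _

lemma repr_coord (hn : 2 ≤ n) (N : ℕ) (p : MvPolynomial (Fin (n+1)) ℝ) (hp : p.totalDegree < N) :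
    ∫ y, (K (((n:ℝ)-1)/2) N).eval (b.repr (y : EE n) 0) *
      MvPolynomial.eval (fun i => b.repr (y : EE n) i) p ∂(sg n) =
    J b 0 (K (((n:ℝ)-1)/2) N) * MvPolynomial.eval (Fin.cons 1 0) p := by
  simp only [MvPolynomial.eval_eq', Finset.mul_sum]
  rw [integral_finset_sum]
  · apply Finset.sum_congr rfl
    intro d hd
    have hdeg : d 0 + ∑ i : Fin n, d i.succ < N := by
      have := MvPolynomial.le_totalDegree hd
      rw [Finsupp.sum_fintype _ _ (by simp), Fin.sum_univ_succ] at this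
      omega
    have h := J_K b hn N _ (fun i => d i.succ) (d 0) rfl hdeg
    rw [J_apply] at h
    have e : ∀ y : sphere (0 : EE n) 1, eval (b.repr (y : EE n) 0) (K (((n:ℝ)-1)/2) N) *
        (p.coeff d * ∏ i, (b.repr (y : EE n) i) ^ d i) = p.coeff d *
        (eval (b.repr (y : EE n) 0) (K (((n:ℝ)-1)/2) N * X ^ d 0) *
          ∏ i : Fin n, (b.repr (y : EE n) i.succ) ^ d i.succ) := by
      intro y
      rw [Fin.prod_univ_succ, eval_mul, eval_pow, eval_X]; ring
    simp only [e]
    rw [integral_const_mul, h, Fin.prod_univ_succ]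
    simp only [Fin.cons_zero, one_pow, Fin.cons_succ, Pi.zero_apply, one_mul]
    split_ifs with h0
    · have : ∀ i : Fin n, d i.succ = 0 := fun i => congrFun h0 i
      simp [this]; ring
    · obtain ⟨j, hj⟩ := Function.ne_iff.1 h0
      rw [Finset.prod_eq_zero (Finset.mem_univ j) (zero_pow hj)]; ring
  · intro d _
    apply integrable_sg; fun_prop

lemma totalDegree_bind (f : Fin (n+1) → MvPolynomial (Fin (n+1)) ℝ) (hf : ∀ i, (f i).totalDegree ≤ 1)
    (p : MvPolynomial (Fin (n+1)) ℝ) : (MvPolynomial.bind₁ f p).totalDegree ≤ p.totalDegree := by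
  rw [MvPolynomial.bind₁, MvPolynomial.aeval_def, MvPolynomial.eval₂_eq']
  apply MvPolynomial.totalDegree_finsetSum_le
  intro d hd
  have h := MvPolynomial.le_totalDegree hd
  rw [Finsupp.sum_fintype _ _ (by simp)] at h
  refine (MvPolynomial.totalDegree_mul _ _).trans ?_
  rw [MvPolynomial.algebraMap_eq, MvPolynomial.totalDegree_C, zero_add]
  refine (MvPolynomial.totalDegree_finsetProd _ _).trans (le_trans ?_ h)
  apply Finset.sum_le_sum
  intro i _
  refine (MvPolynomial.totalDegree_pow _ _).trans ?_
  have := hf i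
  nlinarith

lemma repr_basis (hn : 2 ≤ n) (N : ℕ) (p : MvPolynomial (Fin (n+1)) ℝ) (hp : p.totalDegree < N) :
    ∫ y, (K (((n:ℝ)-1)/2) N).eval (⟪b 0, (y : EE n)⟫) *
      MvPolynomial.eval (fun i => (y : EE n) i) p ∂(sg n) =
    J b 0 (K (((n:ℝ)-1)/2) N) * MvPolynomial.eval (fun i => b 0 i) p := by
  set f : Fin (n+1) → MvPolynomial (Fin (n+1)) ℝ :=
    fun k => ∑ i, MvPolynomial.C (b i k) * MvPolynomial.X i with hf
  have hd : ∀ k, (f k).totalDegree ≤ 1 := by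
    intro k
    apply MvPolynomial.totalDegree_finsetSum_le
    intro i _
    refine (MvPolynomial.totalDegree_mul _ _).trans ?_
    simp
  have h := repr_coord b hn N (MvPolynomial.bind₁ f p) ((totalDegree_bind f hd p).trans_lt hp)
  have hev : ∀ z : Fin (n+1) → ℝ, MvPolynomial.eval z (MvPolynomial.bind₁ f p) =
      MvPolynomial.eval (fun k => ∑ i, b i k * z i) p := by
    intro z
    have := MvPolynomial.eval₂Hom_bind₁ (RingHom.id ℝ) z f p
    simp only [MvPolynomial.eval, hf] at this ⊢
    rw [this]
    simp
  simp only [hev] at h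
  have e1 : ∀ y : EE n, (fun k => ∑ i, b i k * b.repr y i) = fun k => y k := by
    intro y
    ext k
    conv_rhs => rw [← b.sum_repr y]
    simp [mul_comm]
  have e2 : (fun k => ∑ i, b i k * (Fin.cons 1 0 : Fin (n+1) → ℝ) i) = fun k => b 0 k := by
    ext k
    simp [Fin.sum_univ_succ]
  simp only [e1, e2] at h
  simpa only [b.repr_apply_apply] using h

lemma reproducing (hn : 2 ≤ n) (N : ℕ) (x₀ : sphere (0 : EE n) 1) : ∃ c : ℝ,
    ∀ p : MvPolynomial (Fin (n+1)) ℝ, p.totalDegree < N →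
    ∫ y, (K (((n:ℝ)-1)/2) N).eval (⟪(x₀ : EE n), (y : EE n)⟫) *
      MvPolynomial.eval (fun i => (y : EE n) i) p ∂(sg n) =
    c * MvPolynomial.eval (fun i => (x₀ : EE n) i) p := by
  obtain ⟨b, hb⟩ := Orthonormal.exists_orthonormalBasis_extension_of_card_eq (𝕜 := ℝ) (E := EE n)
    (ι := Fin (n+1)) (by simp) (v := fun _ => (x₀ : EE n)) (s := {0}) (by
      constructor
      · intro i; simp
      · intro i j hij; exact absurd (Subsingleton.elim i j) hij)
  have h0 := hb 0 rfl
  exact ⟨_, fun p hp => by rw [← h0]; exact repr_basis b hn N p hp⟩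

lemma zonal_poly (x₀ : EE n) (q : ℝ[X]) (d : ℕ) (hq : q.natDegree ≤ d) :
    ∃ p : MvPolynomial (Fin (n+1)) ℝ, p.totalDegree ≤ d ∧
      ∀ y : EE n, MvPolynomial.eval (fun i => y i) p = q.eval ⟪x₀, y⟫ := by
  set f : MvPolynomial (Fin (n+1)) ℝ := ∑ i, MvPolynomial.C (x₀ i) * MvPolynomial.X i with hf
  have hd : f.totalDegree ≤ 1 := by
    apply MvPolynomial.totalDegree_finsetSum_le
    intro i _
    refine (MvPolynomial.totalDegree_mul _ _).trans ?_
    simp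
  refine ⟨∑ k ∈ Finset.range (d+1), MvPolynomial.C (q.coeff k) * f ^ k, ?_, ?_⟩
  · apply MvPolynomial.totalDegree_finsetSum_le
    intro k hk
    refine (MvPolynomial.totalDegree_mul _ _).trans ?_
    rw [MvPolynomial.totalDegree_C, zero_add]
    refine (MvPolynomial.totalDegree_pow _ _).trans ?_
    have := Finset.mem_range.1 hk
    nlinarith
  · intro y
    have he : MvPolynomial.eval (fun i => y i) f = ⟪x₀, y⟫ := by
      simp [hf, PiLp.inner_apply, mul_comm]
    rw [map_sum, eval_eq_sum_range' (Nat.lt_succ_of_le hq)]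
    simp [he]

lemma K_deg (lam : ℝ) (N : ℕ) : (K lam N).natDegree ≤ N - 1 := by
  apply natDegree_sum_le_of_forall_le
  intro l hl
  refine (natDegree_C_mul_le _ _).trans ((gp_deg lam l).1.trans ?_)
  have := Finset.mem_range.1 hl
  omega

lemma K_pos (lam : ℝ) (hl : 0 < lam) (N : ℕ) (hN : 0 < N) : 0 < (K lam N).eval 1 := by
  rw [K, eval_finset_sum]
  apply Finset.sum_pos
  · intro l _
    rw [eval_mul, eval_C]
    have := gp_one_pos lam hl l
    positivity
  · exact ⟨0, Finset.mem_range.2 hN⟩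

lemma scalingFn_eq (n j : ℕ) (t : ℝ) : scalingFn n j t =
    (2 : ℝ) ^ (-((n * j : ℕ) : ℝ) / 2) * (K (((n:ℝ)-1)/2) (2^(j-1))).eval t := by
  simp only [scalingFn, K, eval_finset_sum, eval_mul, eval_C, (gp_eval _ _ _).1]

end SL

/-- Localization of the weighted scaling function `φ_j` around `x₀`: among all spherical
polynomials `f` of degree at most `2^{j−1}−1` with `f(x₀) = 1`, the minimal (normalized)
`L²`-norm is attained by `φ_j(⟨x₀,·⟩)/φ_j(1)`, and the minimal value equals
`‖φ_j(⟨x₀,·⟩)‖/φ_j(1)`; here the surface measure has total mass `Σ_n = 2π^{λ+1}/Γ(λ+1)`,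
`λ = (n−1)/2`. -/
theorem scalingFn_localization (n j : ℕ) (hn : 2 ≤ n) (hj : 1 ≤ j)
    (x₀ : sphere (0 : EuclideanSpace ℝ (Fin (n + 1))) 1) :
    (∃ p : MvPolynomial (Fin (n + 1)) ℝ, p.totalDegree ≤ 2 ^ (j - 1) - 1 ∧
        ∀ y : sphere (0 : EuclideanSpace ℝ (Fin (n + 1))) 1,
          MvPolynomial.eval (fun i => (y : EuclideanSpace ℝ (Fin (n + 1))) i) p =
            scalingFn n j ⟪(x₀ : EuclideanSpace ℝ (Fin (n + 1))),
                (y : EuclideanSpace ℝ (Fin (n + 1)))⟫ / scalingFn n j 1) ∧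
      IsLeast
        { r : ℝ | ∃ p : MvPolynomial (Fin (n + 1)) ℝ,
            p.totalDegree ≤ 2 ^ (j - 1) - 1 ∧
            MvPolynomial.eval (fun i => (x₀ : EuclideanSpace ℝ (Fin (n + 1))) i) p = 1 ∧
            r = Real.sqrt
              ((1 / (2 * π ^ (((n : ℝ) - 1) / 2 + 1) / Real.Gamma (((n : ℝ) - 1) / 2 + 1))) *
                ∫ y : sphere (0 : EuclideanSpace ℝ (Fin (n + 1))) 1,
                  (MvPolynomial.eval (fun i => (y : EuclideanSpace ℝ (Fin (n + 1))) i) p) ^ 2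
                  ∂((volume : Measure (EuclideanSpace ℝ (Fin (n + 1)))).toSphere)) }
        (Real.sqrt
            ((1 / (2 * π ^ (((n : ℝ) - 1) / 2 + 1) / Real.Gamma (((n : ℝ) - 1) / 2 + 1))) *
              ∫ y : sphere (0 : EuclideanSpace ℝ (Fin (n + 1))) 1,
                (scalingFn n j ⟪(x₀ : EuclideanSpace ℝ (Fin (n + 1))),
                    (y : EuclideanSpace ℝ (Fin (n + 1)))⟫) ^ 2
                ∂((volume : Measure (EuclideanSpace ℝ (Fin (n + 1)))).toSphere)) /
          scalingFn n j 1) := by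
  have hn' : (2:ℝ) ≤ n := by exact_mod_cast hn
  set N := 2 ^ (j - 1) with hN
  have hNpos : 0 < N := by positivity
  set a : ℝ := (2 : ℝ) ^ (-((n * j : ℕ) : ℝ) / 2) with ha
  have hapos : 0 < a := by positivity
  set lam : ℝ := ((n:ℝ)-1)/2 with hlam
  have hlampos : 0 < lam := by rw [hlam]; linarith
  have hs : ∀ t, scalingFn n j t = a * (SL.K lam N).eval t := SL.scalingFn_eq n j
  have hK1 := SL.K_pos lam hlampos N hNpos
  have hφ1 : 0 < scalingFn n j 1 := by rw [hs]; positivity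
  have hx1 : ⟪(x₀ : EuclideanSpace ℝ (Fin (n + 1))), (x₀ : EuclideanSpace ℝ (Fin (n + 1)))⟫ = 1 := by
    rw [real_inner_self_eq_norm_sq]; simp
  -- the extremal polynomial
  obtain ⟨p₀, hp₀d, hp₀⟩ := SL.zonal_poly (n := n) (x₀ : EuclideanSpace ℝ (Fin (n + 1)))
    (Polynomial.C (1 / (SL.K lam N).eval 1) * SL.K lam N) (N - 1)
    ((Polynomial.natDegree_C_mul_le _ _).trans (SL.K_deg lam N))
  have hp₀' : ∀ y : EuclideanSpace ℝ (Fin (n + 1)), MvPolynomial.eval (fun i => y i) p₀ =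
      scalingFn n j ⟪(x₀ : EuclideanSpace ℝ (Fin (n + 1))), y⟫ / scalingFn n j 1 := by
    intro y
    rw [hp₀, hs, hs, Polynomial.eval_mul, Polynomial.eval_C]
    field_simp
  have hp₀x : MvPolynomial.eval (fun i => (x₀ : EuclideanSpace ℝ (Fin (n + 1))) i) p₀ = 1 := by
    rw [hp₀', hx1, div_self hφ1.ne']
  obtain ⟨c, hc⟩ := SL.reproducing hn N x₀
  set M : ℝ := 1 / (2 * π ^ (lam + 1) / Real.Gamma (lam + 1)) with hM
  have hMpos : 0 ≤ M := by
    have := Real.Gamma_pos_of_pos (s := lam + 1) (by linarith)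
    positivity
  -- inner products with the extremal polynomial
  have hinner : ∀ p : MvPolynomial (Fin (n+1)) ℝ, p.totalDegree ≤ N - 1 →
      MvPolynomial.eval (fun i => (x₀ : EuclideanSpace ℝ (Fin (n + 1))) i) p = 1 →
      ∫ y, MvPolynomial.eval (fun i => (y : SL.EE n) i) p₀ *
        MvPolynomial.eval (fun i => (y : SL.EE n) i) p ∂(SL.sg n) = 1 / (SL.K lam N).eval 1 * c := by
    intro p hp h1
    have h := hc p (by omega)
    rw [h1, mul_one] at h
    rw [← h, ← integral_const_mul]
    congr 1
    ext y
    rw [hp₀, Polynomial.eval_mul, Polynomial.eval_C, mul_assoc]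
  have hcont : ∀ p : MvPolynomial (Fin (n+1)) ℝ, Continuous
      (fun y : sphere (0 : SL.EE n) 1 => MvPolynomial.eval (fun i => (y : SL.EE n) i) p) := by
    intro p
    exact (MvPolynomial.continuous_eval p).comp (by fun_prop)
  have hval : Real.sqrt (M * ∫ y : sphere (0 : SL.EE n) 1,
        (scalingFn n j ⟪(x₀ : SL.EE n), (y : SL.EE n)⟫) ^ 2 ∂(SL.sg n)) / scalingFn n j 1 =
      Real.sqrt (M * ∫ y : sphere (0 : SL.EE n) 1,
        (MvPolynomial.eval (fun i => (y : SL.EE n) i) p₀) ^ 2 ∂(SL.sg n)) := by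
    simp only [hp₀', div_pow]
    rw [integral_div, ← mul_div_assoc, Real.sqrt_div' _ (by positivity), Real.sqrt_sq hφ1.le]
  refine ⟨⟨p₀, hp₀d, fun y => hp₀' y⟩, ⟨p₀, hp₀d, hp₀x, hval⟩, ?_⟩
  rintro r ⟨p, hpd, hpx, rfl⟩
  refine hval.le.trans (Real.sqrt_le_sqrt (mul_le_mul_of_nonneg_left ?_ hMpos))
  have i1 := hinner p hpd hpx
  have i2 := hinner p₀ hp₀d hp₀x
  have hnn : 0 ≤ ∫ y, (MvPolynomial.eval (fun i => (y : SL.EE n) i) p -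
      MvPolynomial.eval (fun i => (y : SL.EE n) i) p₀) ^ 2 ∂(SL.sg n) :=
    integral_nonneg fun y => sq_nonneg _
  have hc1 := hcont p
  have hc0 := hcont p₀
  have hexp : ∫ y, (MvPolynomial.eval (fun i => (y : SL.EE n) i) p -
      MvPolynomial.eval (fun i => (y : SL.EE n) i) p₀) ^ 2 ∂(SL.sg n) =
      (∫ y, (MvPolynomial.eval (fun i => (y : SL.EE n) i) p) ^ 2 ∂(SL.sg n)) -
      2 * (∫ y, MvPolynomial.eval (fun i => (y : SL.EE n) i) p₀ *
        MvPolynomial.eval (fun i => (y : SL.EE n) i) p ∂(SL.sg n)) +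
      ∫ y, MvPolynomial.eval (fun i => (y : SL.EE n) i) p₀ *
        MvPolynomial.eval (fun i => (y : SL.EE n) i) p₀ ∂(SL.sg n) := by
    rw [← integral_const_mul, ← integral_sub, ← integral_add]
    · congr 1
      ext y
      ring
    · exact SL.integrable_sg ((hc1.pow 2).sub (continuous_const.mul (hc0.mul hc1)))
    · exact SL.integrable_sg (hc0.mul hc0)
    · exact SL.integrable_sg (hc1.pow 2)
    · exact SL.integrable_sg (continuous_const.mul (hc0.mul hc1))
  rw [hexp, i1, i2] at hnn
  have i3 : ∫ y, (MvPolynomial.eval (fun i => (y : SL.EE n) i) p₀) ^ 2 ∂(SL.sg n) =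
      1 / (SL.K lam N).eval 1 * c := by
    rw [← i2]; simp only [sq]
  linarith
end
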